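/- Let n ≥ 7 and 1 ≤ k ≤ n-2 be integers. Let t_{n,k} ∈ (0,1) be the unique zero of f_{n,k} and set g̃(t) := ₂F₁(1, (n-4)/2; k/2; t²). Then g̃'(t_{n,k})/g̃(t_{n,k}) > ((n-2)·t_{n,k} - (k-1)·t_{n,k}⁻¹)/(1 - t_{n,k}²); that is, 4-n ∈ A_{n,k}. (This is the analytic content of the statement that V_{n,k}(x,y) = (|x|²+|y|²)^{(4-n)/2}·g̃(|y|/√(|x|²+|y|²)) is a strict subsolution of the linearized one-phase problem at the cone U_{n,k}.) -/

import Mathlib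

/-- The Gauss hypergeometric function `₂F₁(a,b;c;s)`, defined by its power series. -/
noncomputable def hyp2F1 (a b c s : ℝ) : ℝ :=
  ∑' m : ℕ, ((ascPochhammer ℝ m).eval a * (ascPochhammer ℝ m).eval b)
    / ((ascPochhammer ℝ m).eval c * (m.factorial : ℝ)) * s ^ m

/-- `f_{n,k}(t) := ₂F₁((n-1)/2, -1/2; k/2; t²)`. -/
noncomputable def fnk (n k : ℕ) (t : ℝ) : ℝ :=
  hyp2F1 (((n : ℝ) - 1) / 2) (-1 / 2) ((k : ℝ) / 2) (t ^ 2)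

/-- `g̃_{n,k}(t) := g_{n,k,4-n}(t) = ₂F₁(1, (n-4)/2; k/2; t²)`. -/
noncomputable def gtil (n k : ℕ) (t : ℝ) : ℝ :=
  hyp2F1 1 (((n : ℝ) - 4) / 2) ((k : ℝ) / 2) (t ^ 2)

/-!
Put `N = n/2`, `c = k/2`, `s = t²`, and let `f = ₂F₁(N-1/2,-1/2;c;s)`, `F = ₂F₁(1,N-2;c;s)`. Because
one numerator parameter of `F` is `1`, `F` satisfies a first order equation (`F_ode`), which turns
the inequality for the logarithmic derivative of `g̃` at the zero `s₀ = t₀²` of `f` into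
`(c-1) + (1/2-s₀) F(s₀) > 0`, called `Good` below. If `c > 1` this holds at every point to the left
of a point where it holds (`good_mono`), so the matter is to show that `s₀` is not too large.

The zero is controlled by comparison functions. For `T = f + Z f'` the hypergeometric equation gives
`s(1-s) T' = f' * Sx - λ Z T` with `λ = (2N-1)/4`, where `Sx` depends only on `Z` and `Z'`
(`T_deriv`). Since `f' < 0`, a function `Z ≥ 0` with `Sx ≥ 0` and `λ Z(0) ≥ c` has `T ≤ 0`
(`compare_weak`; see `compare_strict` for interior initial points); a zero of `Z` then bounds `s₀` from above (`root_le_of_weak`).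

* For `k ≤ 2`, for `k = 3`, for `k = n - 4` and for `(n,k) = (9,4)`, the function `Z = y log (y/y_l)`
  with `y = 1 - s` (`log_test`) and elementary bounds for `F` suffice.
* For `k = n - 3` there is an explicit rational `Z` with `Sx = 0`.
* For `4 ≤ k ≤ n - 5` and `n ≥ 10` the function `P = (c-1)/F` itself is used: it satisfies a Riccati
  equation, and the quadratic terms in `Sx` cancel for `Z = (P - v)/λ` (`Sx_Ph`). With
  `v = s - 1/2` the positivity of `Z(s₀)` is exactly the target inequality, and `Sx > 0` reduces to
  the positivity of a concave quadratic; on `[0, c/N]` a different linear `v` is used to reach the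
  required initial value (`stage_one`, `good_mid`).
* For `k = n - 2` the zero is close to `1`. It is located by `Z = 3 y - 3 κ y^(2/3)` (`cube_test`),
  and `F` is bounded by partial sums for `8 ≤ n ≤ 15` and by a logarithmic supersolution of its
  equation for `n ≥ 16` (`Fh_le_log`). For `n = 7` partial sums of both series are used.
-/

section

open Set

/-! ### Power series on the unit interval -/

/-- The sum of the power series with coefficients `a`. -/
noncomputable def PS (a : ℕ → ℝ) (s : ℝ) : ℝ := ∑' m, a m * s ^ m

/-- The coefficients of the termwise derivative. -/
def dcoef (a : ℕ → ℝ) (m : ℕ) : ℝ := ((m : ℝ) + 1) * a (m + 1)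

/-- The power series with coefficients `a` converges absolutely on the open unit disc. -/
def UnitRadius (a : ℕ → ℝ) : Prop := ∀ r : ℝ, 0 ≤ r → r < 1 → Summable fun m => |a m| * r ^ m

lemma UnitRadius.summable {a : ℕ → ℝ} (ha : UnitRadius a) {s : ℝ} (h0 : |s| < 1) :
    Summable fun m => a m * s ^ m := by
  have := ha |s| (abs_nonneg _) h0
  refine Summable.of_norm ?_
  simpa [abs_mul, abs_pow] using this

lemma UnitRadius.dcoef {a : ℕ → ℝ} (ha : UnitRadius a) : UnitRadius (dcoef a) := by
  intro r h0 h1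
  obtain ⟨q, hq, hq1⟩ := exists_between h1
  have hq0 : 0 < q := h0.trans_lt hq
  have hs := (summable_nat_add_iff 1).2 (ha q hq0.le hq1)
  have hx0 : 0 ≤ r / q := by positivity
  have hx1 : r / q < 1 := (div_lt_one hq0).2 hq
  have ht : Filter.Tendsto (fun m : ℕ => (m : ℝ) * (r / q) ^ m + (r / q) ^ m) Filter.atTop
      (nhds (0 + 0)) :=
    (tendsto_self_mul_const_pow_of_lt_one hx0 hx1).add (tendsto_pow_atTop_nhds_zero_of_lt_one hx0 hx1)
  obtain ⟨C, hC⟩ := ht.bddAbove_range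
  have hC' : ∀ m : ℕ, ((m : ℝ) + 1) * (r / q) ^ m ≤ C := fun m => by
    have := hC ⟨m, rfl⟩
    simp only at this
    linarith
  refine Summable.of_nonneg_of_le (fun m => by positivity) (fun m => ?_) (hs.mul_left (C / q))
  have h2 : |_root_.dcoef a m| = ((m : ℝ) + 1) * |a (m + 1)| := by
    rw [_root_.dcoef, abs_mul, abs_of_nonneg (by positivity)]
  have h3 : r ^ m = (r / q) ^ m * q ^ m := by rw [← mul_pow, div_mul_cancel₀ _ hq0.ne']
  rw [h2, h3]
  calc ((m : ℝ) + 1) * |a (m + 1)| * ((r / q) ^ m * q ^ m)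
      = (((m : ℝ) + 1) * (r / q) ^ m) * (|a (m + 1)| * q ^ m) := by ring
    _ ≤ C * (|a (m + 1)| * q ^ m) := mul_le_mul_of_nonneg_right (hC' m) (by positivity)
    _ = C / q * (|a (m + 1)| * q ^ (m + 1)) := by field_simp; ring

lemma PS_zero (a : ℕ → ℝ) : PS a 0 = a 0 := by
  rw [PS, tsum_eq_single 0]
  · simp
  · intro m hm; simp [hm]

lemma PS_hasDerivAt {a : ℕ → ℝ} (ha : UnitRadius a) {s : ℝ} (hs : |s| < 1) :
    HasDerivAt (PS a) (PS (dcoef a) s) s := by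
  obtain ⟨q, hq, hq1⟩ := exists_between hs
  have hq0 : 0 < q := (abs_nonneg _).trans_lt hq
  have hd := ha.dcoef q hq0.le hq1
  have hu : Summable fun m : ℕ => (m : ℝ) * |a m| * q ^ (m - 1) := by
    rw [← summable_nat_add_iff 1]
    refine hd.congr fun m => ?_
    rw [dcoef, abs_mul, abs_of_nonneg (by positivity : (0 : ℝ) ≤ (m : ℝ) + 1)]
    push_cast
    simp
  have key := hasDerivAt_tsum_of_isPreconnected (g := fun m x => a m * x ^ m)
    (g' := fun m x => a m * ((m : ℝ) * x ^ (m - 1))) (t := Ioo (-q) q) (y₀ := 0) (y := s) hu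
    isOpen_Ioo isPreconnected_Ioo (fun m x _ => (hasDerivAt_pow m x).const_mul (a m))
    (fun m x hx => by
      have : |x| ≤ q := abs_le.2 ⟨hx.1.le, hx.2.le⟩
      rw [Real.norm_eq_abs, abs_mul, abs_mul, abs_pow, Nat.abs_cast]
      calc |a m| * ((m : ℝ) * |x| ^ (m - 1)) ≤ |a m| * ((m : ℝ) * q ^ (m - 1)) := by gcongr
        _ = _ := by ring)
    ⟨by linarith, hq0⟩ (ha.summable (by simp)) ⟨by linarith [neg_abs_le s], by
      linarith [le_abs_self s]⟩
  have e : PS (dcoef a) s = ∑' m, a m * ((m : ℝ) * s ^ (m - 1)) := by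
    have hsum : Summable fun m : ℕ => a m * ((m : ℝ) * s ^ (m - 1)) := by
      rw [← summable_nat_add_iff 1]
      refine (ha.dcoef.summable hs).congr fun m => ?_
      rw [dcoef]; push_cast; ring
    rw [PS, hsum.tsum_eq_zero_add]
    simp only [CharP.cast_eq_zero, zero_mul, mul_zero, zero_add]
    refine tsum_congr fun m => ?_
    rw [dcoef]; push_cast; ring
  rw [e]
  exact key

/-- Multiplying the derivative by `s` is the Euler operator on coefficients. -/
lemma PS_euler {a : ℕ → ℝ} (ha : UnitRadius a) {s : ℝ} (hs : |s| < 1) :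
    HasSum (fun m : ℕ => (m : ℝ) * a m * s ^ m) (s * PS (dcoef a) s) := by
  have h := ((ha.dcoef.summable hs).hasSum.mul_left s)
  have h2 : HasSum (fun m : ℕ => ((m + 1 : ℕ) : ℝ) * a (m + 1) * s ^ (m + 1))
      (s * PS (dcoef a) s) := by
    refine h.congr_fun fun m => ?_
    rw [dcoef]; push_cast; ring
  have := (hasSum_nat_add_iff (f := fun m : ℕ => (m : ℝ) * a m * s ^ m) 1).1 h2
  simpa using this

/-! ### The two hypergeometric functions -/

/-- The Taylor coefficients of `₂F₁(a,b;c;·)`. -/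
noncomputable def hc (a b c : ℝ) (m : ℕ) : ℝ :=
  ((ascPochhammer ℝ m).eval a * (ascPochhammer ℝ m).eval b)
    / ((ascPochhammer ℝ m).eval c * (m.factorial : ℝ))

lemma hyp_eq_PS (a b c : ℝ) : hyp2F1 a b c = PS (hc a b c) := rfl

@[simp] lemma hc_zero (a b c : ℝ) : hc a b c 0 = 1 := by simp [hc]

lemma hc_succ (a b : ℝ) {c : ℝ} (h : 0 < c) (m : ℕ) :
    ((m : ℝ) + 1) * (c + m) * hc a b c (m + 1) = (a + m) * (b + m) * hc a b c m := by
  have h1 : (ascPochhammer ℝ m).eval c ≠ 0 := (ascPochhammer_pos m c h).ne'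
  have h2 : ((m.factorial : ℕ) : ℝ) ≠ 0 := by exact_mod_cast m.factorial_ne_zero
  have h3 : c + m ≠ 0 := by positivity
  have h4 : (m : ℝ) + 1 ≠ 0 := by positivity
  rw [hc, hc, ascPochhammer_succ_eval, ascPochhammer_succ_eval, ascPochhammer_succ_eval,
    Nat.factorial_succ]
  push_cast
  field_simp

/-- The ratio test for non-terminating hypergeometric series. -/
lemma hc_unit {a b c : ℝ} (h : 0 < c) (ha : ∀ m : ℕ, a + m ≠ 0) (hb : ∀ m : ℕ, b + m ≠ 0) :
    UnitRadius (hc a b c) := by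
  have hne : ∀ m, hc a b c m ≠ 0 := by
    intro m
    induction m with
    | zero => simp
    | succ m ih =>
      intro h0
      have := hc_succ a b h m
      rw [h0, mul_zero] at this
      exact mul_ne_zero (mul_ne_zero (ha m) (hb m)) ih this.symm
  intro r h0 h1
  rcases h0.eq_or_lt with rfl | h0
  · refine summable_of_ne_finset_zero (s := {0}) fun m hm => ?_
    simp at hm; simp [hm]
  refine summable_of_ratio_test_tendsto_lt_one (l := r) h1
    (Filter.Eventually.of_forall fun m => by have := hne m; positivity) ?_
  have hr : ∀ m : ℕ, ‖|hc a b c (m + 1)| * r ^ (m + 1)‖ / ‖|hc a b c m| * r ^ m‖ =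
      |(m + a) / (m + c)| * |(m + b) / (m + 1)| * r := by
    intro m
    have e : hc a b c (m + 1) = ((m + a) / (m + c)) * ((m + b) / (m + 1)) * hc a b c m := by
      have := hc_succ a b h m
      have h3 : (m : ℝ) + c ≠ 0 := by positivity
      have h4 : (m : ℝ) + 1 ≠ 0 := by positivity
      field_simp
      linarith
    have := abs_pos.2 (hne m)
    simp only [norm_mul, Real.norm_eq_abs, abs_abs, abs_pow, abs_of_pos h0]
    rw [e, abs_mul, abs_mul]
    field_simp
    ring
  simp_rw [hr]
  have ht : ∀ x y : ℝ, Filter.Tendsto (fun m : ℕ => |((m : ℝ) + x) / (m + y)|) Filter.atTop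
      (nhds 1) := by
    intro x y
    have := (tendsto_add_mul_div_add_mul_atTop_nhds x y (1 : ℝ) (one_ne_zero)).abs
    simp only [one_mul, div_one, abs_one] at this
    refine this.congr fun m => by rw [add_comm x, add_comm y]
  have := ((ht a c).mul (ht b 1)).mul_const r
  simpa using this

/-- The function `₂F₁(N-1/2,-1/2;c;s)`; with `N = n/2`, `c = k/2`, `s = t²` it is `f_{n,k}(t)`. -/
noncomputable def fh (N c : ℝ) : ℝ → ℝ := PS (hc (N - 1 / 2) (-1 / 2) c)

/-- The derivative of `fh`. -/
noncomputable def gh (N c : ℝ) : ℝ → ℝ := PS (dcoef (hc (N - 1 / 2) (-1 / 2) c))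

/-- The second derivative of `fh`. -/
noncomputable def hh (N c : ℝ) : ℝ → ℝ := PS (dcoef (dcoef (hc (N - 1 / 2) (-1 / 2) c)))

/-- The function `₂F₁(1,N-2;c;s)`; with `N = n/2`, `c = k/2`, `s = t²` it is `g̃_{n,k}(t)`. -/
noncomputable def Fh (N c : ℝ) : ℝ → ℝ := PS (hc 1 (N - 2) c)

/-- The derivative of `Fh`. -/
noncomputable def Gh (N c : ℝ) : ℝ → ℝ := PS (dcoef (hc 1 (N - 2) c))

lemma abs_lt_of_mem {s : ℝ} (h : s ∈ Ico (0 : ℝ) 1) : |s| < 1 := by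
  rw [abs_of_nonneg h.1]; exact h.2

section
variable {N c : ℝ}

lemma fc_unit (hN : 2 < N) (hc0 : 0 < c) : UnitRadius (hc (N - 1 / 2) (-1 / 2) c) := by
  refine hc_unit hc0 (fun m => ?_) (fun m h => ?_)
  · have : (0 : ℝ) ≤ m := m.cast_nonneg
    linarith
  · have h2 : ((2 * m : ℕ) : ℝ) = ((1 : ℕ) : ℝ) := by push_cast; linarith
    have := Nat.cast_injective h2
    omega

lemma Fc_unit (hN : 2 < N) (hc0 : 0 < c) : UnitRadius (hc 1 (N - 2) c) := by
  refine hc_unit hc0 (fun m => by positivity) (fun m => ?_)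
  have : (0 : ℝ) ≤ m := m.cast_nonneg
  linarith

lemma fh_deriv (hN : 2 < N) (hc0 : 0 < c) {s : ℝ} (hs : s ∈ Ico (0 : ℝ) 1) :
    HasDerivAt (fh N c) (gh N c s) s := PS_hasDerivAt (fc_unit hN hc0) (abs_lt_of_mem hs)

lemma gh_deriv (hN : 2 < N) (hc0 : 0 < c) {s : ℝ} (hs : s ∈ Ico (0 : ℝ) 1) :
    HasDerivAt (gh N c) (hh N c s) s := PS_hasDerivAt (fc_unit hN hc0).dcoef (abs_lt_of_mem hs)

lemma Fh_deriv (hN : 2 < N) (hc0 : 0 < c) {s : ℝ} (hs : s ∈ Ico (0 : ℝ) 1) :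
    HasDerivAt (Fh N c) (Gh N c s) s := PS_hasDerivAt (Fc_unit hN hc0) (abs_lt_of_mem hs)

lemma fh_zero : fh N c 0 = 1 := by rw [fh, PS_zero, hc_zero]

lemma gh_zero (hc0 : 0 < c) : gh N c 0 = -((2 * N - 1) / (4 * c)) := by
  have := hc_succ (N - 1 / 2) (-1 / 2) hc0 0
  rw [gh, PS_zero, dcoef]
  simp only [CharP.cast_eq_zero, hc_zero] at this ⊢
  rw [← neg_div, eq_div_iff (by positivity)]
  linear_combination 4 * this

/-- All coefficients of `f` but the first are negative, so `f` decreases. -/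
lemma fc_neg (hN : 2 < N) (hc0 : 0 < c) (m : ℕ) : hc (N - 1 / 2) (-1 / 2) c (m + 1) < 0 := by
  induction m with
  | zero =>
    have := hc_succ (N - 1 / 2) (-1 / 2) hc0 0
    simp only [CharP.cast_eq_zero, hc_zero] at this
    simp only [zero_add]
    by_contra! h
    nlinarith [mul_nonneg hc0.le h]
  | succ m ih =>
    have := hc_succ (N - 1 / 2) (-1 / 2) hc0 (m + 1)
    by_contra! h
    have hm : (0 : ℝ) ≤ m := m.cast_nonneg
    push_cast at this
    have h1 : 0 ≤ ((m : ℝ) + 1 + 1) * (c + (m + 1)) * hc (N - 1 / 2) (-1 / 2) c (m + 1 + 1) := by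
      positivity
    have h2 : 0 < (N - 1 / 2 + ((m : ℝ) + 1)) * (-1 / 2 + (m + 1)) :=
      mul_pos (by linarith) (by linarith)
    have := mul_neg_of_pos_of_neg h2 ih
    linarith

lemma gh_neg (hN : 2 < N) (hc0 : 0 < c) {s : ℝ} (hs : s ∈ Ico (0 : ℝ) 1) : gh N c s < 0 := by
  have hsum := (fc_unit hN hc0).dcoef.summable (abs_lt_of_mem hs)
  have h0 : ∀ m, dcoef (hc (N - 1 / 2) (-1 / 2) c) m < 0 := fun m =>
    mul_neg_of_pos_of_neg (by positivity) (fc_neg hN hc0 m)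
  have h1 : gh N c s = dcoef (hc (N - 1 / 2) (-1 / 2) c) 0 * s ^ 0 + _ := hsum.tsum_eq_zero_add
  have h2 : ∑' m : ℕ, dcoef (hc (N - 1 / 2) (-1 / 2) c) (m + 1) * s ^ (m + 1) ≤ 0 :=
    tsum_nonpos fun m => mul_nonpos_of_nonpos_of_nonneg (h0 _).le (pow_nonneg hs.1 _)
  have := h0 0
  rw [h1, pow_zero, mul_one]
  linarith

/-- The hypergeometric equation for `fh`. -/
lemma f_ode (hN : 2 < N) (hc0 : 0 < c) {s : ℝ} (hs : s ∈ Ico (0 : ℝ) 1) :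
    s * (1 - s) * hh N c s + (c - N * s) * gh N c s + (2 * N - 1) / 4 * fh N c s = 0 := by
  have hu := fc_unit hN hc0
  have ha := abs_lt_of_mem hs
  set a := hc (N - 1 / 2) (-1 / 2) c with hadef
  have e0 : HasSum (fun m => a m * s ^ m) (fh N c s) := (hu.summable ha).hasSum
  have e1 : HasSum (fun m => dcoef a m * s ^ m) (gh N c s) := (hu.dcoef.summable ha).hasSum
  have e2 : HasSum (fun m : ℕ => (m : ℝ) * dcoef a m * s ^ m) (s * hh N c s) := PS_euler hu.dcoef ha
  have e3 : HasSum (fun m : ℕ => (m : ℝ) * a m * s ^ m) (s * gh N c s) := PS_euler hu ha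
  have e4 : HasSum (fun m : ℕ => (m : ℝ) * ((m : ℝ) * a m) * s ^ m)
      (s * (gh N c s + s * hh N c s)) := by
    have h := (e1.add e2).mul_left s
    have h2 : HasSum (fun m : ℕ => ((m + 1 : ℕ) : ℝ) * (((m + 1 : ℕ) : ℝ) * a (m + 1)) * s ^ (m + 1))
        (s * (gh N c s + s * hh N c s)) := by
      refine h.congr_fun fun m => ?_
      simp only [dcoef]
      push_cast
      ring
    have := (hasSum_nat_add_iff (f := fun m : ℕ => (m : ℝ) * ((m : ℝ) * a m) * s ^ m) 1).1 h2
    simpa using this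
  have key := ((e2.add (e1.mul_left c)).sub
    ((e4.add (e3.mul_left (N - 1))).sub (e0.mul_left ((2 * N - 1) / 4))))
  have hz : (fun m : ℕ => (m : ℝ) * dcoef a m * s ^ m + c * (dcoef a m * s ^ m) -
      ((m : ℝ) * ((m : ℝ) * a m) * s ^ m + (N - 1) * ((m : ℝ) * a m * s ^ m) -
        (2 * N - 1) / 4 * (a m * s ^ m))) = fun _ => 0 := by
    funext m
    have := hc_succ (N - 1 / 2) (-1 / 2) hc0 m
    rw [← hadef] at this
    rw [dcoef]
    linear_combination s ^ m * this
  rw [hz] at key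
  have := key.unique hasSum_zero
  linear_combination this

lemma Fc_succ (hc0 : 0 < c) (m : ℕ) :
    (c + m) * hc 1 (N - 2) c (m + 1) = (N - 2 + m) * hc 1 (N - 2) c m := by
  have := hc_succ 1 (N - 2) hc0 m
  have h4 : (m : ℝ) + 1 ≠ 0 := by positivity
  refine mul_left_cancel₀ h4 ?_
  linear_combination this

lemma Fc_pos (hN : 2 < N) (hc0 : 0 < c) (m : ℕ) : 0 < hc 1 (N - 2) c m := by
  induction m with
  | zero => simp
  | succ m ih =>
    have := Fc_succ (N := N) hc0 m
    have hm : (0 : ℝ) ≤ m := m.cast_nonneg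
    have h1 : 0 < (N - 2 + m) * hc 1 (N - 2) c m := mul_pos (by linarith) ih
    rw [← this] at h1
    exact (mul_pos_iff_of_pos_left (by positivity)).1 h1

/-- The first order equation for `Fh`, available because one numerator parameter is `1`. -/
lemma F_ode (hN : 2 < N) (hc0 : 0 < c) {s : ℝ} (hs : s ∈ Ico (0 : ℝ) 1) :
    s * (1 - s) * Gh N c s = (c - 1) + ((N - 2) * s - c + 1) * Fh N c s := by
  have hu := Fc_unit hN hc0
  have ha := abs_lt_of_mem hs
  set a := hc 1 (N - 2) c with hadef
  have e0 : HasSum (fun m => a m * s ^ m) (Fh N c s) := (hu.summable ha).hasSum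
  have e3 : HasSum (fun m : ℕ => (m : ℝ) * a m * s ^ m) (s * Gh N c s) := PS_euler hu ha
  have e5 := (hasSum_nat_add_iff' 1).2 (e3.add (e0.mul_left (c - 1)))
  have e6 := (e3.add (e0.mul_left (N - 2))).mul_left s
  have hz : (fun m : ℕ => ((m + 1 : ℕ) : ℝ) * a (m + 1) * s ^ (m + 1)
      + (c - 1) * (a (m + 1) * s ^ (m + 1))) =
      fun m : ℕ => s * ((m : ℝ) * a m * s ^ m + (N - 2) * (a m * s ^ m)) := by
    funext m
    have := Fc_succ (N := N) hc0 m
    rw [← hadef] at this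
    push_cast
    linear_combination s ^ (m + 1) * this
  rw [hz] at e5
  have := e5.unique e6
  have ha0 : a 0 = 1 := hc_zero _ _ _
  simp [ha0] at this
  linear_combination this

lemma Fh_zero : Fh N c 0 = 1 := by rw [Fh, PS_zero, hc_zero]

/-- Partial sums bound `Fh` from below. -/
lemma Fh_ge_sum (hN : 2 < N) (hc0 : 0 < c) {s : ℝ} (hs : s ∈ Ico (0 : ℝ) 1) (M : ℕ) :
    ∑ m ∈ Finset.range M, hc 1 (N - 2) c m * s ^ m ≤ Fh N c s :=
  ((Fc_unit hN hc0).summable (abs_lt_of_mem hs)).sum_le_tsum _ fun m _ =>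
    mul_nonneg (Fc_pos hN hc0 m).le (pow_nonneg hs.1 _)

lemma one_le_Fh (hN : 2 < N) (hc0 : 0 < c) {s : ℝ} (hs : s ∈ Ico (0 : ℝ) 1) : 1 ≤ Fh N c s := by
  have := Fh_ge_sum hN hc0 hs 1
  simpa using this

lemma fh_le_sum (hN : 2 < N) (hc0 : 0 < c) {s : ℝ} (hs : s ∈ Ico (0 : ℝ) 1) (M : ℕ) :
    fh N c s ≤ ∑ m ∈ Finset.range (M + 1), hc (N - 1 / 2) (-1 / 2) c m * s ^ m := by
  have h := ((fc_unit hN hc0).summable (abs_lt_of_mem hs)).sum_add_tsum_nat_add (M + 1)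
  have h2 : ∑' m : ℕ, hc (N - 1 / 2) (-1 / 2) c (m + (M + 1)) * s ^ (m + (M + 1)) ≤ 0 :=
    tsum_nonpos fun m => mul_nonpos_of_nonpos_of_nonneg (fc_neg hN hc0 _).le (pow_nonneg hs.1 _)
  have h3 : fh N c s = ∑' m : ℕ, hc (N - 1 / 2) (-1 / 2) c m * s ^ m := rfl
  linarith

lemma fh_strictAnti (hN : 2 < N) (hc0 : 0 < c) : StrictAntiOn (fh N c) (Ico 0 1) := by
  refine strictAntiOn_of_deriv_neg (convex_Ico 0 1)
    (fun x hx => (fh_deriv hN hc0 hx).continuousAt.continuousWithinAt) fun x hx => ?_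
  rw [interior_Ico] at hx
  rw [(fh_deriv hN hc0 ⟨hx.1.le, hx.2⟩).deriv]
  exact gh_neg hN hc0 ⟨hx.1.le, hx.2⟩

lemma zero_le_of_fh (hN : 2 < N) (hc0 : 0 < c) {s₀ s : ℝ} (h0 : s₀ ∈ Ico (0 : ℝ) 1)
    (hf : fh N c s₀ = 0) (hs : s ∈ Ico (0 : ℝ) 1) (h : fh N c s ≤ 0) : s₀ ≤ s := by
  by_contra! hlt
  have := fh_strictAnti hN hc0 hs h0 hlt
  linarith

end

/-! ### The comparison principle -/

/-- The quantity governing the sign of `(f + Z f')'`: if `T = f + Z f'`, then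
`s (1 - s) T' = f' * Sx - (2 N - 1) / 4 * Z * T`. -/
noncomputable def Sx (N c s z z' : ℝ) : ℝ :=
  s * (1 - s) * (z' + 1) - (c - N * s) * z + (2 * N - 1) / 4 * z ^ 2

section
variable {N c : ℝ}

lemma T_deriv (hN : 2 < N) (hc0 : 0 < c) {s : ℝ} (hs : s ∈ Ico (0 : ℝ) 1) {Z : ℝ → ℝ} {z' : ℝ}
    (hZ : HasDerivAt Z z' s) :
    ∃ t', HasDerivAt (fun x => fh N c x + Z x * gh N c x) t' s ∧
      s * (1 - s) * t' = gh N c s * Sx N c s (Z s) z' -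
        (2 * N - 1) / 4 * Z s * (fh N c s + Z s * gh N c s) := by
  refine ⟨_, (fh_deriv hN hc0 hs).add (hZ.mul (gh_deriv hN hc0 hs)), ?_⟩
  have := f_ode hN hc0 hs
  rw [Sx]
  linear_combination Z s * this

/-- Comparison starting at the singular point `s = 0`, with non-strict inequalities. The condition
at `0` says `f + Z f' ≤ 0` there. -/
lemma compare_weak (hN : 2 < N) (hc0 : 0 < c) {x : ℝ} (hx : x ∈ Ico (0 : ℝ) 1) {Z Z' : ℝ → ℝ}
    (hZ : ∀ s ∈ Icc 0 x, HasDerivAt Z (Z' s) s) (h0 : c ≤ (2 * N - 1) / 4 * Z 0)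
    (hpos : ∀ s ∈ Ioo 0 x, 0 ≤ Z s) (hS : ∀ s ∈ Ioo 0 x, 0 ≤ Sx N c s (Z s) (Z' s)) :
    fh N c x + Z x * gh N c x ≤ 0 := by
  have hmem : ∀ s ∈ Icc 0 x, s ∈ Ico (0 : ℝ) 1 := fun s hs => ⟨hs.1, hs.2.trans_lt hx.2⟩
  choose! t' ht' htS using fun s (hs : s ∈ Icc 0 x) => T_deriv hN hc0 (hmem s hs) (hZ s hs)
  have hT0 : fh N c 0 + Z 0 * gh N c 0 ≤ 0 := by
    rw [fh_zero, gh_zero hc0]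
    have : Z 0 * -((2 * N - 1) / (4 * c)) = -((2 * N - 1) / 4 * Z 0) / c := by field_simp
    rw [this]
    have : -((2 * N - 1) / 4 * Z 0) / c ≤ -1 := by
      rw [div_le_iff₀ hc0]; linarith
    linarith
  -- Compare with the barrier `ε (1 + s)`, which makes every inequality strict.
  have key : ∀ ε > 0, fh N c x + Z x * gh N c x ≤ ε * (1 + x) := by
    intro ε hε
    refine image_le_of_deriv_right_lt_deriv_boundary'
      (f := fun s => fh N c s + Z s * gh N c s) (f' := t')
      (B := fun s => ε * (1 + s)) (B' := fun _ => ε) (a := 0) (b := x)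
      (fun s hs => (ht' s hs).continuousAt.continuousWithinAt)
      (fun s hs => (ht' s ⟨hs.1, hs.2.le⟩).hasDerivWithinAt)
      (by simpa using hT0.trans hε.le) (by fun_prop)
      (fun s _ => by
        have := ((hasDerivAt_id s).const_add 1).const_mul ε
        simpa using this.hasDerivWithinAt) ?_ ⟨hx.1, le_rfl⟩
    intro s hs he
    rcases hs.1.eq_or_lt with rfl | hs0
    · linarith
    have hs' : s ∈ Icc 0 x := ⟨hs.1, hs.2.le⟩
    have h1 := htS s hs'
    have h2 := hS s ⟨hs0, hs.2⟩
    have h3 := hpos s ⟨hs0, hs.2⟩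
    have h4 := gh_neg hN hc0 (hmem s hs')
    rw [he] at h1
    have h5 : 0 ≤ (2 * N - 1) / 4 * Z s * (ε * (1 + s)) :=
      mul_nonneg (mul_nonneg (by linarith) h3) (by positivity)
    have h7 : gh N c s * Sx N c s (Z s) (Z' s) ≤ 0 := mul_nonpos_of_nonpos_of_nonneg h4.le h2
    have h8 : 0 < s * (1 - s) := mul_pos hs0 (by linarith [hx.2, hs.2])
    have h9 : t' s ≤ 0 := by
      by_contra! h
      nlinarith [mul_pos h8 h]
    exact h9.trans_lt hε
  refine le_of_forall_pos_le_add fun δ hδ => ?_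
  have := key (δ / (1 + x)) (div_pos hδ (by linarith [hx.1]))
  rw [div_mul_cancel₀ _ (by linarith [hx.1] : (1 + x) ≠ 0)] at this
  linarith

/-- Comparison starting at an interior point, with strict conclusion and no sign condition
on `Z`. -/
lemma compare_strict (hN : 2 < N) (hc0 : 0 < c) {a x : ℝ} (ha : 0 < a) (hax : a < x) (hx : x < 1)
    {Z Z' : ℝ → ℝ} (hZ : ∀ s ∈ Icc a x, HasDerivAt Z (Z' s) s)
    (h0 : fh N c a + Z a * gh N c a ≤ 0) (hS : ∀ s ∈ Icc a x, 0 < Sx N c s (Z s) (Z' s)) :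
    fh N c x + Z x * gh N c x < 0 := by
  have hmem : ∀ s ∈ Icc a x, s ∈ Ico (0 : ℝ) 1 := fun s hs =>
    ⟨ha.le.trans hs.1, hs.2.trans_lt hx⟩
  choose! t' ht' htS using fun s (hs : s ∈ Icc a x) => T_deriv hN hc0 (hmem s hs) (hZ s hs)
  have hneg : ∀ s ∈ Icc a x, fh N c s + Z s * gh N c s = 0 → t' s < 0 := by
    intro s hs he
    have h1 := htS s hs
    have h7 := mul_neg_of_neg_of_pos (gh_neg hN hc0 (hmem s hs)) (hS s hs)
    have h8 : 0 < s * (1 - s) := mul_pos (ha.trans_le hs.1) (by linarith [hs.2])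
    rw [he, mul_zero, sub_zero] at h1
    by_contra! h
    nlinarith [mul_nonneg h8.le h]
  have hle : ∀ s ∈ Icc a x, fh N c s + Z s * gh N c s ≤ 0 := fun s hs =>
    image_le_of_deriv_right_lt_deriv_boundary'
      (f := fun s => fh N c s + Z s * gh N c s) (f' := t')
      (B := fun _ => 0) (B' := fun _ => 0) (a := a) (b := x)
      (fun s hs => (ht' s hs).continuousAt.continuousWithinAt)
      (fun s hs => (ht' s ⟨hs.1, hs.2.le⟩).hasDerivWithinAt)
      h0 continuousOn_const (fun s _ => hasDerivWithinAt_const _ _ _)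
      (fun s hs he => hneg s ⟨hs.1, hs.2.le⟩ he) hs
  have hxm : x ∈ Icc a x := ⟨hax.le, le_rfl⟩
  refine lt_of_le_of_ne (hle x hxm) fun he => ?_
  -- At a zero the left difference quotients are nonnegative, yet the derivative is negative.
  have h1 := (hasDerivWithinAt_iff_tendsto_slope' (s := Iio x) (by simp)).1
    (ht' x hxm).hasDerivWithinAt
  have h2 : 0 ≤ t' x := by
    refine ge_of_tendsto h1 ?_
    filter_upwards [Ioo_mem_nhdsLT hax] with s hs
    rw [slope_def_field]
    have h3 := hle s ⟨hs.1.le, hs.2.le⟩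
    simp only [he] at h3 ⊢
    exact div_nonneg_of_nonpos (by linarith) (by linarith [hs.2])
  exact absurd (hneg x hxm he) (not_lt.2 h2)

/-- A zero of `Z` bounds the zero of `f` from above. -/
lemma root_le_of_weak (hN : 2 < N) (hc0 : 0 < c) {s₀ x : ℝ} (h₀ : s₀ ∈ Ico (0 : ℝ) 1)
    (hf : fh N c s₀ = 0) (hx : x ∈ Ico (0 : ℝ) 1) {Z Z' : ℝ → ℝ}
    (hZ : ∀ s ∈ Icc 0 x, HasDerivAt Z (Z' s) s) (h0 : c ≤ (2 * N - 1) / 4 * Z 0)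
    (hpos : ∀ s ∈ Ioo 0 x, 0 ≤ Z s) (hS : ∀ s ∈ Ioo 0 x, 0 ≤ Sx N c s (Z s) (Z' s))
    (hz : Z x = 0) : s₀ ≤ x := by
  have := compare_weak hN hc0 hx hZ h0 hpos hS
  rw [hz, zero_mul, add_zero] at this
  exact zero_le_of_fh hN hc0 h₀ hf hx this

/-! ### The function `P = (c - 1) / F` -/

/-- The function `(c-1)/F`, which satisfies a Riccati equation. -/
noncomputable def Ph (N c s : ℝ) : ℝ := (c - 1) / Fh N c s

/-- The derivative of `Ph`. -/
noncomputable def Phd (N c s : ℝ) : ℝ := -((c - 1) * Gh N c s) / Fh N c s ^ 2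

lemma Ph_deriv (hN : 2 < N) (hc0 : 0 < c) {s : ℝ} (hs : s ∈ Ico (0 : ℝ) 1) :
    HasDerivAt (Ph N c) (Phd N c s) s := by
  have h1 := one_le_Fh hN hc0 hs
  have := (hasDerivAt_const s (c - 1)).div (Fh_deriv hN hc0 hs) (by linarith)
  refine HasDerivAt.congr_deriv (f := Ph N c) this ?_
  rw [Phd, zero_mul, zero_sub]

lemma Ph_riccati (hN : 2 < N) (hc0 : 0 < c) {s : ℝ} (hs : s ∈ Ico (0 : ℝ) 1) :
    s * (1 - s) * Phd N c s = -(Ph N c s * (Ph N c s + (N - 2) * s - c + 1)) := by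
  have h1 := one_le_Fh hN hc0 hs
  have h2 : Fh N c s ≠ 0 := by linarith
  have := F_ode hN hc0 hs
  rw [Phd, Ph]
  field_simp
  linear_combination (-(c - 1)) * this

/-- For `c ≤ N - 2` the series of `F` is dominated by a geometric series. -/
lemma Ph_ge_left (hN : 2 < N) (hc1 : 1 ≤ c) (hcN : c ≤ N - 2) {s : ℝ} (hs : s ∈ Ico (0 : ℝ) 1) :
    (c - 1) * (1 - (N - 2) * s / c) ≤ Ph N c s := by
  have hc0 : 0 < c := by linarith
  have hF := one_le_Fh hN hc0 hs
  rcases le_or_gt 1 ((N - 2) * s / c) with h | h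
  · have : 0 ≤ Ph N c s := div_nonneg (by linarith) (by linarith)
    have := mul_nonneg (by linarith : 0 ≤ c - 1) (by linarith : 0 ≤ (N - 2) * s / c - 1)
    linarith
  have h0 : 0 ≤ (N - 2) * s / c := div_nonneg (mul_nonneg (by linarith) hs.1) hc0.le
  have hco : ∀ m, hc 1 (N - 2) c m ≤ ((N - 2) / c) ^ m := by
    intro m
    induction m with
    | zero => simp
    | succ m ih =>
      have e := Fc_succ (N := N) hc0 m
      have hm : (0 : ℝ) ≤ m := m.cast_nonneg
      have hcm : 0 < c + m := by linarith
      have h1 : hc 1 (N - 2) c (m + 1) = (N - 2 + m) / (c + m) * hc 1 (N - 2) c m := by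
        field_simp; linarith
      have h2 : (N - 2 + m) / (c + m) ≤ (N - 2) / c := by
        rw [div_le_div_iff₀ hcm hc0]; nlinarith
      rw [h1, pow_succ, mul_comm (_ ^ m)]
      exact mul_le_mul h2 ih (Fc_pos hN hc0 m).le (div_nonneg (by linarith) hc0.le)
  have hle : Fh N c s ≤ (1 - (N - 2) * s / c)⁻¹ := by
    rw [← tsum_geometric_of_lt_one h0 h]
    refine ((Fc_unit hN hc0).summable (abs_lt_of_mem hs)).tsum_le_tsum (fun m => ?_)
      (summable_geometric_of_lt_one h0 h)
    have : ((N - 2) * s / c) ^ m = ((N - 2) / c) ^ m * s ^ m := by rw [← mul_pow]; ring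
    rw [this]
    exact mul_le_mul_of_nonneg_right (hco m) (pow_nonneg hs.1 _)
  have h1 : 0 < 1 - (N - 2) * s / c := sub_pos.2 h
  rw [Ph, div_eq_mul_inv]
  refine mul_le_mul_of_nonneg_left ?_ (by linarith)
  exact (le_inv_comm₀ (by linarith) h1).1 hle

/-- For `N - 2 ≤ c` the coefficients of `F` decrease, so a partial sum and a geometric tail bound
`F` from above. -/
lemma Fh_le_sum (hN : 2 < N) (hc0 : 0 < c) (hcN : N - 2 ≤ c) {s : ℝ} (hs : s ∈ Ico (0 : ℝ) 1)
    (M : ℕ) : Fh N c s ≤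
      ∑ m ∈ Finset.range M, hc 1 (N - 2) c m * s ^ m + hc 1 (N - 2) c M * s ^ M / (1 - s) := by
  have h := ((Fc_unit hN hc0).summable (abs_lt_of_mem hs)).sum_add_tsum_nat_add M
  have h3 : Fh N c s = ∑' m : ℕ, hc 1 (N - 2) c m * s ^ m := rfl
  have hanti : Antitone (hc 1 (N - 2) c) := by
    refine antitone_nat_of_succ_le fun m => ?_
    have e := Fc_succ (N := N) hc0 m
    have hp := Fc_pos hN hc0 m
    have hm : (0 : ℝ) ≤ m := m.cast_nonneg
    have hcm : 0 < c + m := by linarith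
    refine le_of_mul_le_mul_left ?_ hcm
    rw [e]
    exact mul_le_mul_of_nonneg_right (by linarith) hp.le
  have hg := summable_geometric_of_lt_one hs.1 hs.2
  have h2 : ∑' m : ℕ, hc 1 (N - 2) c (m + M) * s ^ (m + M) ≤
      hc 1 (N - 2) c M * s ^ M / (1 - s) := by
    rw [div_eq_mul_inv, ← tsum_geometric_of_lt_one hs.1 hs.2, ← tsum_mul_left]
    refine Summable.tsum_le_tsum (fun m => ?_)
      ((summable_nat_add_iff M).2 ((Fc_unit hN hc0).summable (abs_lt_of_mem hs)))
      (hg.mul_left _)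
    have : hc 1 (N - 2) c M * s ^ M * s ^ m = hc 1 (N - 2) c M * s ^ (m + M) := by ring
    rw [this]
    exact mul_le_mul_of_nonneg_right (hanti (by omega)) (pow_nonneg hs.1 _)
  linarith

lemma Ph_ge_right (hN : 2 < N) (hc1 : 1 ≤ c) (hcN : N - 2 ≤ c) {s : ℝ} (hs : s ∈ Ico (0 : ℝ) 1) :
    (c - 1) * (1 - s) ≤ Ph N c s := by
  have hc0 : 0 < c := by linarith
  have h := Fh_le_sum hN hc0 hcN hs 0
  have hF := one_le_Fh hN hc0 hs
  have hs1 : 0 < 1 - s := by linarith [hs.2]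
  simp only [Finset.range_zero, Finset.sum_empty, hc_zero, pow_zero, zero_add, mul_one] at h
  rw [le_div_iff₀ hs1] at h
  rw [Ph, le_div_iff₀ (by linarith)]
  have := mul_nonneg (by linarith : 0 ≤ c - 1) (by linarith : 0 ≤ 1 - Fh N c s * (1 - s))
  linarith

/-- The target inequality, in the variable `s = t²`. -/
def Good (N c s : ℝ) : Prop := 0 < (c - 1) + (1 / 2 - s) * Fh N c s

lemma good_of_Ph (hN : 2 < N) (hc0 : 0 < c) {s : ℝ} (hs : s ∈ Ico (0 : ℝ) 1)
    (h : 0 < Ph N c s + 1 / 2 - s) : Good N c s := by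
  have hF := one_le_Fh hN hc0 hs
  have : (c - 1) + (1 / 2 - s) * Fh N c s = Fh N c s * (Ph N c s + 1 / 2 - s) := by
    rw [Ph]; field_simp; ring
  rw [Good, this]
  exact mul_pos (by linarith) h

end

/-! ### A logarithmic comparison function -/

section
variable {N c : ℝ}

/-- The comparison function `y log (y / y_l)`, `y = 1 - s`, locates the zero of `f`. -/
lemma log_test (hN : 2 < N) (hc0 : 0 < c) (hd : 1 < N - c) {s₀ yl : ℝ} (h₀ : s₀ ∈ Ico (0 : ℝ) 1)
    (hf : fh N c s₀ = 0) (hy0 : 0 < yl) (hy1 : yl < 1)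
    (hyl : yl ≤ (N - c - 1) / ((2 * N - 1) / 4) *
      (0.36787 * (1 + 2 / (2 * N - 1) + (2 / (2 * N - 1)) ^ 2 / 2))) : s₀ ≤ 1 - yl := by
  set w := 2 / (2 * N - 1) with hw
  set l := (2 * N - 1) / 4 with hl
  have hl0 : 0 < l := by rw [hl]; linarith
  have hwpos : 0 < w := div_pos two_pos (by linarith)
  have hlw : 2 * l * w = 1 := by rw [hl, hw]; field_simp [(by linarith : 2 * N - 1 ≠ 0)]; norm_num
  have hd0 : 0 < N - c - 1 := by linarith
  have hexp : 0.36787 * (1 + w + w ^ 2 / 2) ≤ Real.exp (w - 1) := by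
    rw [sub_eq_add_neg, Real.exp_add, mul_comm]
    refine mul_le_mul (Real.quadratic_le_exp_of_nonneg hwpos.le) ?_ (by norm_num)
      (Real.exp_pos _).le
    rw [Real.exp_neg, le_inv_comm₀ (by norm_num) (Real.exp_pos _)]
    exact Real.exp_one_lt_d9.le.trans (by norm_num)
  have hlog : Real.log yl ≤ Real.log ((N - c - 1) / l) + (w - 1) := by
    rw [← Real.log_exp (w - 1), ← Real.log_mul (by positivity) (Real.exp_pos _).ne']
    exact Real.log_le_log hy0 (hyl.trans (by gcongr))
  -- The bound `1 - 1/x ≤ log x` at `x = l y / (N - c - 1)`.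
  have hb : ∀ y : ℝ, 0 < y → (N - 1) * y - (N - c - 1) ≤ l * y * (Real.log y - Real.log yl) := by
    intro y hy
    have h1 := Real.one_sub_inv_le_log_of_pos (x := y / ((N - c - 1) / l)) (by positivity)
    rw [Real.log_div hy.ne' (by positivity)] at h1
    have h2 : 2 - w - (y / ((N - c - 1) / l))⁻¹ ≤ Real.log y - Real.log yl := by linarith
    have h3 := mul_le_mul_of_nonneg_left h2 (by positivity : 0 ≤ l * y)
    have h4 : l * y * (2 - w - (y / ((N - c - 1) / l))⁻¹) = (N - 1) * y - (N - c - 1) := by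
      have : l * y * (y / ((N - c - 1) / l))⁻¹ = N - c - 1 := by field_simp
      have h5 : l * y * (2 - w) = (N - 1) * y := by
        have : 2 * l = N - 1 / 2 := by rw [hl]; ring
        linear_combination y * this - y / 2 * hlw
      linarith
    linarith
  have hder : ∀ s ∈ Icc 0 (1 - yl), HasDerivAt (fun s => (1 - s) * (Real.log (1 - s) - Real.log yl))
      (-(Real.log (1 - s) - Real.log yl) - 1) s := by
    intro s hs
    have hy : 0 < 1 - s := by linarith [hs.2]
    have h1 : HasDerivAt (fun s : ℝ => 1 - s) (-1) s := by
      simpa using (hasDerivAt_id s).const_sub 1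
    refine (h1.mul ((h1.log hy.ne').sub_const _)).congr_deriv ?_
    field_simp
    ring
  refine root_le_of_weak hN hc0 h₀ hf (x := 1 - yl) ⟨by linarith, by linarith⟩ hder ?_ ?_ ?_ ?_
  · have := hb 1 one_pos
    simp only [sub_zero, Real.log_one, one_mul, mul_one] at this ⊢
    rw [← hl]
    linarith
  · intro s hs
    have hy : yl ≤ 1 - s := by linarith [hs.2]
    exact mul_nonneg (hy0.le.trans hy) (sub_nonneg.2 (Real.log_le_log hy0 hy))
  · intro s hs
    have hy : yl ≤ 1 - s := by linarith [hs.2]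
    have h1 := hb (1 - s) (hy0.trans_le hy)
    have h2 : 0 ≤ (1 - s) * (Real.log (1 - s) - Real.log yl) :=
      mul_nonneg (hy0.le.trans hy) (sub_nonneg.2 (Real.log_le_log hy0 hy))
    have h3 := mul_nonneg h2 (sub_nonneg.2 h1)
    have h4 : Sx N c s ((1 - s) * (Real.log (1 - s) - Real.log yl))
        (-(Real.log (1 - s) - Real.log yl) - 1) = (1 - s) * (Real.log (1 - s) - Real.log yl) *
          (l * (1 - s) * (Real.log (1 - s) - Real.log yl) -
            ((N - 1) * (1 - s) - (N - c - 1))) := by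
      rw [Sx, hl]; ring
    rw [h4]; exact h3
  · simp

lemma bound_eq (hN : 2 < N) :
    (N - c - 1) / ((2 * N - 1) / 4) = 2 - (2 * c + 1) * (2 / (2 * N - 1)) := by
  have h0 : 2 * N - 1 ≠ 0 := by linarith
  have h : 2 / (2 * N - 1) * (2 * N - 1) = 2 := div_mul_cancel₀ _ h0
  rw [div_eq_iff (by positivity)]
  linear_combination (2 * c + 1) / 4 * h

/-! ### Small values of `k` -/

/-- For `c = 1 / 2` the term `c - 1` is negative, so `F` has to be bounded below. -/
lemma good_one (hN : 7 / 2 ≤ N) {s : ℝ} (hs0 : 0 < s) (hs : s ∈ Ico (0 : ℝ) 1)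
    (hf : fh N (1 / 2) s = 0) : Good N (1 / 2) s := by
  have hN2 : 2 < N := by linarith
  have hs1 : s ≤ 1 - 0.68 := by
    refine log_test hN2 (by norm_num) (by linarith) hs hf (by norm_num) (by norm_num) ?_
    set w := 2 / (2 * N - 1) with hw
    have hw0 : 0 < w := div_pos two_pos (by linarith)
    have hw1 : w ≤ 1 / 3 := by rw [hw, div_le_iff₀ (by linarith)]; linarith
    rw [bound_eq hN2, ← hw]
    have h : (2 - 2 * w) * (1 + w + w ^ 2 / 2) = 2 - w ^ 2 - w ^ 3 := by ring
    have h2 : w ^ 2 ≤ (1 / 3) ^ 2 := by gcongr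
    have h3 : w ^ 3 ≤ (1 / 3) ^ 3 := by gcongr
    nlinarith
  have hco : ∀ m : ℕ, 2 * (m : ℝ) + 1 ≤ hc 1 (N - 2) (1 / 2) m := by
    intro m
    induction m with
    | zero => simp
    | succ m ih =>
      have e := Fc_succ (N := N) (c := 1 / 2) (by norm_num) m
      have hm : (0 : ℝ) ≤ m := m.cast_nonneg
      have h1 : (3 / 2 + (m : ℝ)) * (2 * m + 1) ≤ (N - 2 + m) * hc 1 (N - 2) (1 / 2) m :=
        mul_le_mul (by linarith) ih (by linarith) (by linarith)
      push_cast
      nlinarith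
  have hF : ∑ m ∈ Finset.range 5, (2 * (m : ℝ) + 1) * s ^ m ≤ Fh N (1 / 2) s :=
    (Finset.sum_le_sum fun m _ => mul_le_mul_of_nonneg_right (hco m) (pow_nonneg hs.1 _)).trans
      (Fh_ge_sum hN2 (by norm_num) hs 5)
  simp only [Finset.sum_range_succ, Finset.range_zero, Finset.sum_empty] at hF
  norm_num at hF hs1
  have h2 : s ^ 2 ≤ (8 / 25) ^ 2 := by gcongr
  have h3 : s ^ 3 ≤ (8 / 25) ^ 3 := by gcongr
  have h4 : s ^ 4 ≤ (8 / 25) ^ 4 := by gcongr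
  have h5 : 0 < s * (1 - s - 3 * s ^ 2 - 5 * s ^ 3 - 18 * s ^ 4) := mul_pos hs0 (by linarith)
  have h6 := mul_le_mul_of_nonneg_left hF (by linarith : 0 ≤ 1 / 2 - s)
  rw [Good]
  linarith

/-- For `c = 1` the zero lies to the left of `1 / 2`, which suffices; `good_three` uses the same
fact for `c = 3 / 2`. -/
lemma good_two (hN : 7 / 2 ≤ N) {s : ℝ} (hs : s ∈ Ico (0 : ℝ) 1) (hf : fh N 1 s = 0) :
    Good N 1 s := by
  have hN2 : 2 < N := by linarith
  have hs1 : s ≤ 1 - 0.505 := by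
    refine log_test hN2 (by norm_num) (by linarith) hs hf (by norm_num) (by norm_num) ?_
    set w := 2 / (2 * N - 1) with hw
    have hw0 : 0 < w := div_pos two_pos (by linarith)
    have hw1 : w ≤ 1 / 3 := by rw [hw, div_le_iff₀ (by linarith)]; linarith
    rw [bound_eq hN2, ← hw]
    have h : (2 - 3 * w) * (1 + w + w ^ 2 / 2) = 2 - w - 2 * w ^ 2 - 3 / 2 * w ^ 3 := by ring
    have h2 : w ^ 2 ≤ (1 / 3) ^ 2 := by gcongr
    have h3 : w ^ 3 ≤ (1 / 3) ^ 3 := by gcongr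
    nlinarith
  have hF := one_le_Fh hN2 one_pos hs
  have : 0 < (1 / 2 - s) * Fh N 1 s := mul_pos (by linarith) (by linarith)
  rw [Good]; linarith

end

section
variable {N c : ℝ}

lemma Fh_mono (hN : 2 < N) (hc0 : 0 < c) {s x : ℝ} (hs : s ∈ Ico (0 : ℝ) 1)
    (hx : x ∈ Ico (0 : ℝ) 1) (h : s ≤ x) : Fh N c s ≤ Fh N c x :=
  ((Fc_unit hN hc0).summable (abs_lt_of_mem hs)).tsum_le_tsum
    (fun m => mul_le_mul_of_nonneg_left (pow_le_pow_left₀ hs.1 h m) (Fc_pos hN hc0 m).le)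
    ((Fc_unit hN hc0).summable (abs_lt_of_mem hx))

/-- The target inequality passes to smaller arguments. -/
lemma good_mono (hN : 2 < N) (hc1 : 1 < c) {s x : ℝ} (hs : s ∈ Ico (0 : ℝ) 1)
    (hx : x ∈ Ico (0 : ℝ) 1) (h : s ≤ x) (hg : Good N c x) : Good N c s := by
  have hc0 : 0 < c := by linarith
  have h1 := one_le_Fh hN hc0 hs
  have h2 := Fh_mono hN hc0 hs hx h
  rw [Good] at *
  rcases le_or_gt s (1 / 2) with hs2 | hs2
  · have := mul_nonneg (sub_nonneg.2 hs2) (by linarith : 0 ≤ Fh N c s)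
    linarith
  · have : (s - 1 / 2) * Fh N c s ≤ (x - 1 / 2) * Fh N c x :=
      mul_le_mul (by linarith) h2 (by linarith) (by linarith)
    linarith

/-- The logarithmic bound for the zero combined with the geometric bound for `F` (`Ph_ge_left`). -/
lemma good_of_left (hN : 2 < N) (hc1 : 1 < c) (hcN : c ≤ N - 2) {s yl : ℝ}
    (hs : s ∈ Ico (0 : ℝ) 1) (hf : fh N c s = 0) (hy0 : 0 < yl) (hy1 : yl < 1)
    (hyl : yl ≤ (2 - (2 * c + 1) * (2 / (2 * N - 1))) *
      (0.36787 * (1 + 2 / (2 * N - 1) + (2 / (2 * N - 1)) ^ 2 / 2)))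
    (h : 0 < (c - 1) * (1 - (N - 2) * (1 - yl) / c) + 1 / 2 - (1 - yl)) : Good N c s := by
  have hc0 : 0 < c := by linarith
  have hm : 1 - yl ∈ Ico (0 : ℝ) 1 := ⟨by linarith, by linarith⟩
  refine good_mono hN hc1 hs hm ?_ (good_of_Ph hN hc0 hm ?_)
  · exact log_test hN hc0 (by linarith) hs hf hy0 hy1 (by rw [bound_eq hN]; exact hyl)
  · have := Ph_ge_left hN hc1.le hcN hm
    linarith

lemma good_three (hN : 5 ≤ N) {s : ℝ} (hs : s ∈ Ico (0 : ℝ) 1) (hf : fh N (3 / 2) s = 0) :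
    Good N (3 / 2) s := by
  have hN2 : 2 < N := by linarith
  have hs1 : s ≤ 1 - 0.505 := by
    refine log_test hN2 (by norm_num) (by linarith) hs hf (by norm_num) (by norm_num) ?_
    set w := 2 / (2 * N - 1) with hw
    have hw0 : 0 < w := div_pos two_pos (by linarith)
    have hw1 : w ≤ 2 / 9 := by rw [hw, div_le_iff₀ (by linarith)]; linarith
    rw [bound_eq hN2, ← hw]
    have h : (2 - 4 * w) * (1 + w + w ^ 2 / 2) = 2 - 2 * w - 3 * w ^ 2 - 2 * w ^ 3 := by ring
    have h2 : w ^ 2 ≤ (2 / 9) ^ 2 := by gcongr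
    have h3 : w ^ 3 ≤ (2 / 9) ^ 3 := by gcongr
    nlinarith
  have hF := one_le_Fh hN2 (by norm_num : (0 : ℝ) < 3 / 2) hs
  have : 0 < (1 / 2 - s) * Fh N (3 / 2) s := mul_pos (by linarith) (by linarith)
  rw [Good]; linarith

lemma good_eight_three {s : ℝ} (hs : s ∈ Ico (0 : ℝ) 1) (hf : fh 4 (3 / 2) s = 0) :
    Good 4 (3 / 2) s :=
  good_of_left (by norm_num) (by norm_num) (by norm_num) hs hf (yl := 0.418) (by norm_num)
    (by norm_num) (by norm_num) (by norm_num)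

lemma good_nine_three {s : ℝ} (hs : s ∈ Ico (0 : ℝ) 1) (hf : fh (9 / 2) (3 / 2) s = 0) :
    Good (9 / 2) (3 / 2) s :=
  good_of_left (by norm_num) (by norm_num) (by norm_num) hs hf (yl := 0.471) (by norm_num)
    (by norm_num) (by norm_num) (by norm_num)

lemma good_nine_four {s : ℝ} (hs : s ∈ Ico (0 : ℝ) 1) (hf : fh (9 / 2) 2 s = 0) :
    Good (9 / 2) 2 s :=
  good_of_left (by norm_num) (by norm_num) (by norm_num) hs hf (yl := 0.353) (by norm_num)
    (by norm_num) (by norm_num) (by norm_num)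

/-! ### The values `k = n - 4` and `k = n - 3` -/

lemma good_sub_four (hN : 7 / 2 ≤ N) {s : ℝ} (hs : s ∈ Ico (0 : ℝ) 1) (hf : fh N (N - 2) s = 0) :
    Good N (N - 2) s := by
  have hN2 : 2 < N := by linarith
  have hc0 : 0 < N - 2 := by linarith
  have hs1 : s ≤ 1 - 0.505 / (N - 2) := by
    refine log_test hN2 hc0 (by linarith) hs hf (by positivity) ?_ ?_
    · rw [div_lt_one hc0]; linarith
    set w := 2 / (2 * N - 1) with hw
    have hw0 : 0 < w := div_pos two_pos (by linarith)
    have hw1 : w ≤ 1 / 3 := by rw [hw, div_le_iff₀ (by linarith)]; linarith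
    rw [bound_eq hN2, ← hw, div_le_iff₀ hc0]
    have hww : w * (2 * N - 1) = 2 := div_mul_cancel₀ _ (by linarith)
    have e : (2 - (2 * (N - 2) + 1) * w) * (N - 2) = 2 - 3 * w := by
      linear_combination (3 - N) * hww
    have h : (2 - 3 * w) * (1 + w + w ^ 2 / 2) = 2 - w - 2 * w ^ 2 - 3 / 2 * w ^ 3 := by ring
    have h2 : w ^ 2 ≤ (1 / 3) ^ 2 := by gcongr
    have h3 : w ^ 3 ≤ (1 / 3) ^ 3 := by gcongr
    have h4 : (2 - (2 * (N - 2) + 1) * w) * (0.36787 * (1 + w + w ^ 2 / 2)) * (N - 2) =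
        0.36787 * ((2 - 3 * w) * (1 + w + w ^ 2 / 2)) := by rw [← e]; ring
    rw [h4, h]
    linarith
  refine good_of_Ph hN2 hc0 hs ?_
  have h1 := Ph_ge_right hN2 (by linarith : 1 ≤ N - 2) le_rfl hs
  have h2 : 0.505 ≤ (1 - s) * (N - 2) := by
    rw [← div_le_iff₀ hc0]; linarith
  nlinarith

lemma Sx_div (N c s n m : ℝ) {q : ℝ} (hq : q ≠ 0) : Sx N c s (n / q) (m / q ^ 2) =
    (s * (1 - s) * (m + q ^ 2) - (c - N * s) * n * q + (2 * N - 1) / 4 * n ^ 2) / q ^ 2 := by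
  rw [Sx]
  field_simp

/-- The case `k = n - 3`. The comparison function in the proof makes `Sx` vanish identically, and
its zero `k / (k + 1)` bounds the zero of `f`. -/
lemma good_sub_three (hc2 : 2 ≤ c) {s : ℝ} (hs : s ∈ Ico (0 : ℝ) 1)
    (hf : fh (c + 3 / 2) c s = 0) : Good (c + 3 / 2) c s := by
  have hN2 : 2 < c + 3 / 2 := by linarith
  have hc0 : 0 < c := by linarith
  have hx : 2 * c / (2 * c + 1) ∈ Ico (0 : ℝ) 1 :=
    ⟨by positivity, by rw [div_lt_one (by positivity)]; linarith⟩
  have hmul : ∀ x ≤ 2 * c / (2 * c + 1), (2 * c + 1) * x ≤ 2 * c := by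
    intro x hx
    rw [le_div_iff₀ (by positivity)] at hx
    linarith
  have hder : ∀ x ∈ Icc 0 (2 * c / (2 * c + 1)), HasDerivAt
      (fun x => 2 * (1 - x) * (2 * c - (2 * c + 1) * x) / (2 * c + 2 - (2 * c + 1) * x))
      (((-2 * (2 * c - (2 * c + 1) * x) - 2 * (1 - x) * (2 * c + 1)) * (2 * c + 2 - (2 * c + 1) * x)
        + 2 * (1 - x) * (2 * c - (2 * c + 1) * x) * (2 * c + 1)) /
          (2 * c + 2 - (2 * c + 1) * x) ^ 2) x := by
    intro x hx
    have h1 : 2 * c + 2 - (2 * c + 1) * x ≠ 0 := by linarith [hmul x hx.2]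
    have d := hasDerivAt_id x
    have d1 := (d.const_sub 1).const_mul 2
    have d2 := (d.const_mul (2 * c + 1)).const_sub (2 * c)
    have d3 := (d.const_mul (2 * c + 1)).const_sub (2 * c + 2)
    refine ((d1.mul d2).div d3 h1).congr_deriv ?_
    simp only [id, Pi.mul_apply]
    ring
  have hroot : s ≤ 2 * c / (2 * c + 1) := by
    refine root_le_of_weak hN2 hc0 hs hf hx hder ?_ ?_ ?_ ?_
    · simp only [sub_zero, mul_zero]
      refine le_of_eq ?_
      field_simp
      ring
    · intro x hx
      have := hmul x hx.2.le
      have h1 : x < 1 := hx.2.trans (by rw [div_lt_one (by positivity)]; linarith)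
      exact div_nonneg (mul_nonneg (by linarith) (by linarith)) (by linarith)
    · intro x hx
      have := hmul x hx.2.le
      have h1 : 2 * c + 2 - (2 * c + 1) * x ≠ 0 := by linarith
      rw [Sx_div _ _ _ _ _ h1]
      refine le_of_eq (div_eq_zero_iff.2 (Or.inl ?_)).symm
      ring
    · have : (2 * c + 1) * (2 * c / (2 * c + 1)) = 2 * c := mul_div_cancel₀ _ (by positivity)
      rw [this]
      simp
  refine good_mono hN2 (by linarith) hs hx hroot ?_
  have hF := Fh_le_sum hN2 hc0 (by linarith) hx 4
  have e : ∀ m : ℕ, hc 1 (c + 3 / 2 - 2) c (m + 1) =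
      (c - 1 / 2 + m) / (c + m) * hc 1 (c + 3 / 2 - 2) c m := by
    intro m
    have := Fc_succ (N := c + 3 / 2) hc0 m
    have h1 : 0 < c + m := by positivity
    rw [div_mul_eq_mul_div, eq_div_iff h1.ne']
    linear_combination this
  have e1 := e 0
  have e2 := e 1
  have e3 := e 2
  have e4 := e 3
  norm_num at e1 e2 e3 e4
  simp only [Finset.sum_range_succ, Finset.range_zero, Finset.sum_empty, e4, e3, e2, e1, hc_zero]
    at hF
  obtain ⟨j, hj, rfl⟩ : ∃ j, 0 ≤ j ∧ c = j + 2 := ⟨c - 2, by linarith, by ring⟩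
  have hlt : (2 * (j + 2) / (2 * (j + 2) + 1) - 1 / 2) *
      Fh (j + 2 + 3 / 2) (j + 2) (2 * (j + 2) / (2 * (j + 2) + 1)) < j + 2 - 1 := by
    refine (mul_le_mul_of_nonneg_left hF ?_).trans_lt ?_
    · rw [sub_nonneg, div_le_div_iff₀ (by norm_num) (by positivity)]
      linarith
    rw [← sub_pos]
    norm_num
    have h1 : 1 - 2 * (j + 2) / (2 * (j + 2) + 1) = 1 / (2 * (j + 2) + 1) := by
      field_simp
      ring
    rw [h1]
    field_simp
    rw [← sub_pos]
    ring_nf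
    positivity
  rw [Good]
  linarith

end

/-! ### The intermediate range `4 ≤ k ≤ n - 5` -/

section
variable {N c : ℝ}

/-- `Sx` for `Z = (P - v) / λ` with `λ = (2 N - 1) / 4`: the quadratic terms in `P` cancel. -/
lemma Sx_Ph (hN : 2 < N) (hc0 : 0 < c) {s : ℝ} (hs : s ∈ Ico (0 : ℝ) 1) (v v' : ℝ) :
    (2 * N - 1) / 4 * Sx N c s ((Ph N c s - v) / ((2 * N - 1) / 4))
      ((Phd N c s - v') / ((2 * N - 1) / 4)) =
    (2 * s - 1 - 2 * v) * Ph N c s + s * (1 - s) * ((2 * N - 1) / 4 - v') + (c - N * s) * v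
      + v ^ 2 := by
  have h0 : (2 * N - 1) / 4 ≠ 0 := by
    have : 0 < (2 * N - 1) / 4 := by linarith
    exact this.ne'
  have h := Ph_riccati hN hc0 hs
  have h1 : ∀ z, (2 * N - 1) / 4 * (z / ((2 * N - 1) / 4)) = z := fun z => mul_div_cancel₀ _ h0
  have h2 := h1 (Ph N c s - v)
  have h3 := h1 (Phd N c s - v')
  rw [Sx]
  set Z := (Ph N c s - v) / ((2 * N - 1) / 4)
  set Z' := (Phd N c s - v') / ((2 * N - 1) / 4)
  linear_combination h + s * (1 - s) * h3 - (c - N * s) * h2 +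
    ((2 * N - 1) / 4 * Z + (Ph N c s - v)) * h2

/-- First stage: on `[0, c / N]` the comparison function interpolates between the value forced at
`s = 0` and the function `(P - s + 1 / 2) / λ`, `λ = (2 N - 1) / 4`, used beyond `c / N`. -/
lemma stage_one (hN : 5 ≤ N) (hc2 : 2 ≤ c) (hcN : c ≤ N - 5 / 2) :
    fh N c (c / N) + (Ph N c (c / N) - (c / N - 1 / 2)) / ((2 * N - 1) / 4) * gh N c (c / N)
      ≤ 0 := by
  have hN2 : 2 < N := by linarith
  have hN0 : 0 < N := by linarith
  have hc0 : 0 < c := by linarith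
  have hl : 0 < (2 * N - 1) / 4 := by linarith
  have hx : c / N ∈ Ico (0 : ℝ) 1 := ⟨by positivity, by rw [div_lt_one hN0]; linarith⟩
  have hP0 : Ph N c 0 = c - 1 := by rw [Ph, Fh_zero, div_one]
  have key := compare_weak hN2 hc0 hx
    (Z := fun s => (Ph N c s - (s - 1 + N / (2 * c) * s)) / ((2 * N - 1) / 4))
    (Z' := fun s => (Phd N c s - (1 + N / (2 * c))) / ((2 * N - 1) / 4)) ?_ ?_ ?_ ?_
  · have e : c / N - 1 + N / (2 * c) * (c / N) = c / N - 1 / 2 := by field_simp; ring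
    simpa only [e] using key
  · intro s hs
    have h1 := Ph_deriv hN2 hc0 (s := s) ⟨hs.1, hs.2.trans_lt hx.2⟩
    have h2 := ((hasDerivAt_id s).sub_const 1).add ((hasDerivAt_id s).const_mul (N / (2 * c)))
    refine ((h1.sub h2).div_const _).congr_deriv ?_
    rw [mul_one]
  · simp only [hP0, mul_zero, add_zero, zero_sub]
    rw [mul_div_cancel₀ _ hl.ne']
    linarith
  all_goals
    intro s hs
    have hs1 : s ∈ Ico (0 : ℝ) 1 := ⟨hs.1.le, hs.2.trans hx.2⟩
    have hP := Ph_ge_left hN2 (by linarith) (by linarith : c ≤ N - 2) hs1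
    obtain ⟨r, hr0, hr1, rfl⟩ : ∃ r, 0 < r ∧ r < 1 ∧ s = c / N * r := by
      have h0 : 0 < c / N := by positivity
      exact ⟨s / (c / N), div_pos hs.1 h0, (div_lt_one h0).2 hs.2, (mul_div_cancel₀ _ h0.ne').symm⟩
    have e1 : N / (2 * c) * (c / N * r) = r / 2 := by field_simp
    have e2 : (N - 2) * (c / N * r) / c = r - 2 / N * r := by field_simp
    rw [e2] at hP
    have hNi : 0 < 1 / N := by positivity
    have e3 : 2 / N = 2 * (1 / N) := by ring
    have e4 : c / N = c * (1 / N) := by ring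
    set i := 1 / N with hi
  · refine div_nonneg ?_ hl.le
    rw [e1]
    rw [e3] at hP
    rw [e4] at hP ⊢
    have : 0 ≤ (1 - r) * c + r * (1 / 2 + (c - 2) * i) :=
      add_nonneg (mul_nonneg (by linarith) hc0.le)
        (mul_nonneg hr0.le (add_nonneg (by norm_num) (mul_nonneg (by linarith) hNi.le)))
    nlinarith
  · refine nonneg_of_mul_nonneg_right ?_ hl
    rw [Sx_Ph hN2 hc0 hs1, e1]
    have hPr : (c - 1) * (1 - r) ≤ Ph N c (c / N * r) := by
      refine le_trans ?_ hP
      have : 0 ≤ 2 / N * r := by positivity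
      exact mul_le_mul_of_nonneg_left (by linarith) (by linarith)
    have h1 := mul_le_mul_of_nonneg_left hPr (by linarith : 0 ≤ 1 - r)
    have hL0 : 0 ≤ 4 * c ^ 2 - 13 * c + 2 * N := by nlinarith
    have hL1 : 0 ≤ 2 * (N - c) * c * N + 9 * c ^ 2 - 7 * c * N - N ^ 2 := by
      obtain ⟨j, hj, rfl⟩ : ∃ j, 0 ≤ j ∧ c = j + 2 := ⟨c - 2, by linarith, by ring⟩
      obtain ⟨m, hm, rfl⟩ : ∃ m, 0 ≤ m ∧ N = m + 5 := ⟨N - 5, by linarith, by ring⟩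
      nlinarith [mul_nonneg hj hm, mul_nonneg hj (by linarith : 0 ≤ m + 1 / 2 - j),
        mul_nonneg hm (by linarith : 0 ≤ m + 1 / 2 - j),
        mul_nonneg (mul_nonneg hj hm) (by linarith : 0 ≤ m + 1 / 2 - j)]
    have e5 : (1 - r) * ((c - 1) * (1 - r)) +
        c / N * r * (1 - c / N * r) * ((2 * N - 1) / 4 - (1 + N / (2 * c))) +
        (c - N * (c / N * r)) * (c / N * r - 1 + r / 2) + (c / N * r - 1 + r / 2) ^ 2 =
        c / N * r * ((1 - r) * ((4 * c ^ 2 - 13 * c + 2 * N) / (4 * c)) +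
          r * ((2 * (N - c) * c * N + 9 * c ^ 2 - 7 * c * N - N ^ 2) / (4 * c * N))) := by
      field_simp
      ring
    have h2 : 0 ≤ c / N * r * ((1 - r) * ((4 * c ^ 2 - 13 * c + 2 * N) / (4 * c)) +
          r * ((2 * (N - c) * c * N + 9 * c ^ 2 - 7 * c * N - N ^ 2) / (4 * c * N))) := by
      have := sub_pos.2 hr1
      positivity
    rw [← e5] at h2
    linarith

/-- A concave quadratic that is positive at the ends of an interval is positive on it. -/
lemma quad_pos {A B C a x b : ℝ} (hA : 0 ≤ A) (hax : a ≤ x) (hxb : x < b)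
    (ha : 0 < -A * a ^ 2 + B * a - C) (hb : 0 ≤ -A * b ^ 2 + B * b - C) :
    0 < -A * x ^ 2 + B * x - C := by
  have h1 : 0 ≤ A * (x - a) * (b - x) * (b - a) :=
    mul_nonneg (mul_nonneg (mul_nonneg hA (by linarith)) (by linarith)) (by linarith)
  have h2 := mul_pos ha (sub_pos.2 hxb)
  have h3 := mul_nonneg hb (sub_nonneg.2 hax)
  refine pos_of_mul_pos_right (b := -A * x ^ 2 + B * x - C) (a := b - a) ?_ (by linarith)
  linarith

/-- Second stage: beyond `c / N` the comparison function is `Z = (P - s + 1 / 2) / λ`. At the zero of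
`f` the inequality `f + Z f' < 0` gives `Z > 0`, which is the target inequality. -/
lemma good_mid (hN : 5 ≤ N) (hc2 : 2 ≤ c) (hcN : c ≤ N - 5 / 2) {s₀ : ℝ}
    (hs : s₀ ∈ Ico (0 : ℝ) 1) (hf : fh N c s₀ = 0) : Good N c s₀ := by
  have hN2 : 2 < N := by linarith
  have hN0 : 0 < N := by linarith
  have hc0 : 0 < c := by linarith
  have hl : 0 < (2 * N - 1) / 4 := by linarith
  rcases le_or_gt s₀ (c / N) with hle | hlt
  · refine good_of_Ph hN2 hc0 hs ?_
    have hP := Ph_ge_left hN2 (by linarith) (by linarith : c ≤ N - 2) hs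
    have h1 : (N - 2) * s₀ / c ≤ 1 - 2 * (1 / N) := by
      rw [div_le_iff₀ hc0]
      refine (mul_le_mul_of_nonneg_left hle (by linarith)).trans (le_of_eq ?_)
      field_simp
    have h2 := mul_le_mul_of_nonneg_left h1 (by linarith : 0 ≤ c - 1)
    have h3 : s₀ ≤ c * (1 / N) := by rw [mul_one_div]; exact hle
    have h4 : 0 ≤ (c - 2) * (1 / N) := mul_nonneg (by linarith) (by positivity)
    linarith
  have hM : 0 < 4 * N - 5 := by linarith
  have hq : 0 < N - c - 1 := by linarith
  have hyM : 2.94 * (N - c - 1) / (4 * N - 5) * (4 * N - 5) = 2.94 * (N - c - 1) :=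
    div_mul_cancel₀ _ hM.ne'
  have hy0 : 0 < 2.94 * (N - c - 1) / (4 * N - 5) := by positivity
  have hroot : s₀ ≤ 1 - 2.94 * (N - c - 1) / (4 * N - 5) := by
    refine log_test hN2 hc0 (by linarith) hs hf hy0 ?_ ?_
    · rw [div_lt_one hM]; linarith
    have hx : 0 < 2 * N - 1 := by linarith
    have h1 : 2.94 / (4 * N - 5) ≤ 4 / (2 * N - 1) * (0.36787 * (1 + 2 / (2 * N - 1))) := by
      have : 4 / (2 * N - 1) * (0.36787 * (1 + 2 / (2 * N - 1))) =
          1.47148 * (2 * N + 1) / (2 * N - 1) ^ 2 := by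
        field_simp
        ring
      rw [this, div_le_div_iff₀ hM (by positivity)]
      nlinarith
    have h2 := mul_le_mul_of_nonneg_left h1 hq.le
    have h3 : (N - c - 1) * (2.94 / (4 * N - 5)) = 2.94 * (N - c - 1) / (4 * N - 5) := by ring
    rw [h3] at h2
    refine h2.trans ?_
    have h4 : (N - c - 1) * (4 / (2 * N - 1) * (0.36787 * (1 + 2 / (2 * N - 1)))) =
      (N - c - 1) / ((2 * N - 1) / 4) * (0.36787 * (1 + 2 / (2 * N - 1))) := by
      field_simp
    rw [h4]
    have h5 : 0 ≤ (2 / (2 * N - 1)) ^ 2 / 2 := by positivity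
    refine mul_le_mul_of_nonneg_left ?_ (div_nonneg hq.le hl.le)
    linarith
  set yl := 2.94 * (N - c - 1) / (4 * N - 5) with hyl
  have ha : 0 < c / N := by positivity
  have hT := compare_strict hN2 hc0 ha hlt hs.2
    (Z := fun s => (Ph N c s - (s - 1 / 2)) / ((2 * N - 1) / 4))
    (Z' := fun s => (Phd N c s - 1) / ((2 * N - 1) / 4)) ?_ (stage_one hN hc2 hcN) ?_
  · have hg := gh_neg hN2 hc0 hs
    rw [hf, zero_add] at hT
    have hZ : 0 < (Ph N c s₀ - (s₀ - 1 / 2)) / ((2 * N - 1) / 4) := by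
      by_contra! h
      nlinarith [mul_nonneg_of_nonpos_of_nonpos h hg.le]
    have := (div_pos_iff_of_pos_right hl).1 hZ
    exact good_of_Ph hN2 hc0 hs (by linarith)
  · intro s hs'
    have h1 := Ph_deriv hN2 hc0 (s := s) ⟨ha.le.trans hs'.1, hs'.2.trans_lt hs.2⟩
    exact (h1.sub ((hasDerivAt_id s).sub_const (1 / 2))).div_const _
  · intro s hs'
    refine pos_of_mul_pos_right ?_ hl.le
    rw [Sx_Ph hN2 hc0 ⟨ha.le.trans hs'.1, hs'.2.trans_lt hs.2⟩]
    -- The value is a concave quadratic in `1 - s`, positive at `y_l` and at `1 - c / N`.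
    have hyq : yl ≤ 0.196 * (N - c - 1) := by
      rw [hyl, div_le_iff₀ hM]
      nlinarith
    have hy7 : yl ≤ 0.735 := by
      rw [hyl, div_le_iff₀ hM]
      linarith
    have hBl : 0 < -(6 * N - 9) * yl ^ 2 + (8 * N - 9 - 4 * c) * yl - (2 * (N - c) - 1) := by
      have e : -(6 * N - 9) * yl ^ 2 + (8 * N - 9 - 4 * c) * yl - (2 * (N - c) - 1) =
          0.94 * (N - c - 1) - 1 - 0.41 * (N - c - 1) * yl + 1.5 * yl ^ 2 := by
        linear_combination (1 - 1.5 * yl) * hyM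
      rw [e]
      rcases le_or_gt 2 (N - c - 1) with h | h <;> nlinarith
    have hBr : 0 < -(6 * N - 9) * (1 - c / N) ^ 2 + (8 * N - 9 - 4 * c) * (1 - c / N)
        - (2 * (N - c) - 1) := by
      have e : -(6 * N - 9) * (1 - c / N) ^ 2 + (8 * N - 9 - 4 * c) * (1 - c / N)
        - (2 * (N - c) - 1) = (2 * N - 9) * (1 - c / N) * (c / N) + 1 := by
        field_simp
        ring
      have h1 : c / N < 1 := by rw [div_lt_one hN0]; linarith
      rw [e]
      exact add_pos_of_nonneg_of_pos
        (mul_nonneg (mul_nonneg (by linarith) (by linarith)) ha.le) one_pos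
    rcases hs'.1.eq_or_lt with h | h
    · rw [h] at hBr
      linarith
    have := quad_pos (by linarith) (by linarith [hs'.2] : yl ≤ 1 - s) (by linarith) hBl hBr.le
    linarith

end

/-! ### The value `k = n - 2` -/

section
variable {N : ℝ}

/-- The comparison function `3 v ^ 2 (v - κ)`, `v = (1 - s) ^ (1 / 3)`, locates the zero of `f`
for `k = n - 2`. -/
lemma cube_test (hN : 7 / 2 ≤ N) {κ : ℝ} (hκ : 0 < κ) (h1 : 3 * (2 * N - 1) * κ ≤ 2 * N + 1)
    (h2 : 27 * (2 * N - 1) ^ 3 * κ ^ 3 ≤ (6 * N - 1) ^ 2) {s₀ : ℝ} (h₀ : s₀ ∈ Ico (0 : ℝ) 1)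
    (hf : fh N (N - 1) s₀ = 0) : s₀ ≤ 1 - κ ^ 3 := by
  have hN2 : 2 < N := by linarith
  have hκ1 : κ < 1 := by
    by_contra! h
    nlinarith
  have hκ3 : κ ^ 3 < 1 := pow_lt_one₀ hκ.le hκ1 (by norm_num)
  have hκ0 : 0 < κ ^ 3 := by positivity
  have hv3 : ∀ y : ℝ, 0 ≤ y → (y ^ (1 / 3 : ℝ)) ^ 3 = y := by
    intro y hy
    rw [← Real.rpow_natCast, ← Real.rpow_mul hy]
    norm_num
  have hvκ : (κ ^ 3) ^ (1 / 3 : ℝ) = κ := by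
    rw [← Real.rpow_natCast, ← Real.rpow_mul hκ.le]
    norm_num
  have hle : ∀ s ≤ 1 - κ ^ 3, κ ≤ (1 - s) ^ (1 / 3 : ℝ) := by
    intro s hs
    conv_lhs => rw [← hvκ]
    exact Real.rpow_le_rpow hκ0.le (by linarith) (by norm_num)
  refine root_le_of_weak hN2 (by linarith) h₀ hf (x := 1 - κ ^ 3) ⟨by linarith, by linarith⟩
    (Z := fun s => 3 * ((1 - s) ^ (1 / 3 : ℝ)) ^ 3 - 3 * κ * ((1 - s) ^ (1 / 3 : ℝ)) ^ 2)
    (Z' := fun s => -3 + 2 * κ / (1 - s) ^ (1 / 3 : ℝ)) ?_ ?_ ?_ ?_ ?_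
  · intro s hs
    have hy : 0 < 1 - s := by linarith [hs.2]
    have hv := hv3 (1 - s) hy.le
    have hv0 : 0 < (1 - s) ^ (1 / 3 : ℝ) := Real.rpow_pos_of_pos hy _
    have d1 : HasDerivAt (fun s : ℝ => 1 - s) (-1) s := by
      simpa using (hasDerivAt_id s).const_sub 1
    have d2 := d1.rpow_const (p := 1 / 3) (Or.inl hy.ne')
    have e : (1 - s) ^ ((1 / 3 : ℝ) - 1) = (1 - s) ^ (1 / 3 : ℝ) / (1 - s) := by
      rw [Real.rpow_sub_one hy.ne']
    rw [e] at d2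
    refine (((d2.pow 3).const_mul 3).sub ((d2.pow 2).const_mul (3 * κ))).congr_deriv ?_
    set v := (1 - s) ^ (1 / 3 : ℝ)
    rw [← hv]
    field_simp
    norm_num
    ring
  · simp only [sub_zero, Real.one_rpow]
    linarith
  · intro s hs
    have := hle s hs.2.le
    have h3 : 0 ≤ ((1 - s) ^ (1 / 3 : ℝ)) ^ 2 * ((1 - s) ^ (1 / 3 : ℝ) - κ) :=
      mul_nonneg (sq_nonneg _) (by linarith)
    linarith
  · intro s hs
    have hy : 0 < 1 - s := by linarith [hs.2]
    have hv := hv3 (1 - s) hy.le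
    have hvle := hle s hs.2.le
    have hv0 : 0 < (1 - s) ^ (1 / 3 : ℝ) := Real.rpow_pos_of_pos hy _
    set v := (1 - s) ^ (1 / 3 : ℝ) with hvdef
    clear_value v
    obtain rfl : s = 1 - v ^ 3 := by linarith
    have e : Sx N (N - 1) (1 - v ^ 3) (3 * v ^ 3 - 3 * κ * v ^ 2) (-3 + 2 * κ / v) =
        (v - κ) * v ^ 2 * (1 + (6 * N - 1) / 4 * v ^ 3 - 9 * (2 * N - 1) / 4 * κ * v ^ 2) := by
      rw [Sx]
      field_simp
      ring
    rw [e]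
    refine mul_nonneg (mul_nonneg (by linarith) (sq_nonneg _)) ?_
    -- With `G = (6 N - 1) / 4`, `A = 9 (2 N - 1) κ / 4` and `u = 3 G v`, the bracket times `27 G ^ 2`
    -- is `(u - 2 A) ^ 2 (u + A) + (27 G ^ 2 - 4 A ^ 3)`.
    have h3 : 0 ≤ (3 * ((6 * N - 1) / 4) * v - 2 * (9 * (2 * N - 1) / 4 * κ)) ^ 2 *
        (3 * ((6 * N - 1) / 4) * v + 9 * (2 * N - 1) / 4 * κ) := by
      have : 0 < 2 * N - 1 := by linarith
      have : 0 < 6 * N - 1 := by linarith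
      positivity
    refine nonneg_of_mul_nonneg_right (a := 27 * ((6 * N - 1) / 4) ^ 2) ?_ ?_
    · linarith
    · have : 0 < 6 * N - 1 := by linarith
      positivity
  · simp only [sub_sub_cancel, hvκ]
    ring

/-- The coefficients of `₂F₁(1,b;b+1;·)`, `b = N - 2`. -/
lemma Fc_top (hN : 2 < N) (m : ℕ) : hc 1 (N - 2) (N - 1) m = (N - 2) / (N - 2 + m) := by
  have hb : 0 < N - 2 := by linarith
  induction m with
  | zero => simp [hb.ne']
  | succ m ih =>
    have := Fc_succ (N := N) (c := N - 1) (by linarith) m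
    have hm : (0 : ℝ) ≤ m := m.cast_nonneg
    rw [ih] at this
    rw [mul_div_cancel₀ _ (by linarith)] at this
    rw [eq_div_iff (by push_cast; linarith)]
    push_cast
    linear_combination this

/-- A numerical certificate for `Good` at a point to the right of the zero. -/
lemma good_top_of_sum (hN : 2 < N) {s x : ℝ} (hs : s ∈ Ico (0 : ℝ) 1) (hx : x ∈ Ico (0 : ℝ) 1)
    (hsx : s ≤ x) (hx2 : 1 / 2 ≤ x) (M : ℕ)
    (h : (x - 1 / 2) * (∑ m ∈ Finset.range M, 1 / (N - 2 + m) * x ^ m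
      + 1 / (N - 2 + M) * x ^ M / (1 - x)) < 1) : Good N (N - 1) s := by
  have hb : 0 < N - 2 := by linarith
  refine good_mono hN (by linarith) hs hx hsx ?_
  have hF := Fh_le_sum hN (by linarith : 0 < N - 1) (by linarith) hx M
  have e : ∑ m ∈ Finset.range M, hc 1 (N - 2) (N - 1) m * x ^ m
      + hc 1 (N - 2) (N - 1) M * x ^ M / (1 - x) =
      (N - 2) * (∑ m ∈ Finset.range M, 1 / (N - 2 + m) * x ^ m
      + 1 / (N - 2 + M) * x ^ M / (1 - x)) := by
    rw [mul_add, Finset.mul_sum]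
    congr 1
    · refine Finset.sum_congr rfl fun m _ => ?_
      rw [Fc_top hN]; ring
    · rw [Fc_top hN]; ring
  rw [e] at hF
  have h1 := mul_le_mul_of_nonneg_left hF (sub_nonneg.2 hx2)
  have h2 := mul_lt_mul_of_pos_left h hb
  rw [Good]
  linarith

/-- The coefficients of `₂F₁(3,-1/2;5/2;·)`. -/
lemma fc_top_seven (m : ℕ) : hc (7 / 2 - 1 / 2) (-1 / 2) (7 / 2 - 1) m =
    -(3 / 16) * ((m + 1) * (m + 2)) / ((m - 1 / 2) * (m + 1 / 2) * (m + 3 / 2)) := by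
  have hne : ∀ m : ℕ, (m : ℝ) - 1 / 2 ≠ 0 := by
    intro m h
    have h2 : ((2 * m : ℕ) : ℝ) = ((1 : ℕ) : ℝ) := by push_cast; linarith
    have := Nat.cast_injective h2
    omega
  induction m with
  | zero => norm_num
  | succ m ih =>
    have h := hc_succ (7 / 2 - 1 / 2) (-1 / 2) (by norm_num : (0 : ℝ) < 7 / 2 - 1) m
    have h1 := hne m
    rw [ih] at h
    have h3 : (m : ℝ) + 1 - 1 / 2 = m + 1 / 2 := by ring
    have h4 : (m : ℝ) + 1 + 1 / 2 = m + 3 / 2 := by ring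
    have h5 : (m : ℝ) + 1 + 3 / 2 = m + 5 / 2 := by ring
    push_cast
    rw [h3, h4, h5]
    refine mul_left_cancel₀ (by positivity : ((m : ℝ) + 1) * (7 / 2 - 1 + m) ≠ 0) ?_
    rw [h]
    have h6 : (m : ℝ) + 1 / 2 ≠ 0 := by positivity
    have h7 : (m : ℝ) + 3 / 2 ≠ 0 := by positivity
    have h8 : (m : ℝ) + 5 / 2 ≠ 0 := by positivity
    rw [mul_div_assoc', mul_div_assoc', div_eq_div_iff (by positivity) (by positivity)]
    ring

lemma good_top_seven {s : ℝ} (hs : s ∈ Ico (0 : ℝ) 1) (hf : fh (7 / 2) (7 / 2 - 1) s = 0) :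
    Good (7 / 2) (7 / 2 - 1) s := by
  have hx : (0.928 : ℝ) ∈ Ico (0 : ℝ) 1 := ⟨by norm_num, by norm_num⟩
  refine good_top_of_sum (by norm_num) hs hx ?_ (by norm_num) 22 ?_
  · refine zero_le_of_fh (by norm_num) (by norm_num) hs hf hx ?_
    refine (fh_le_sum (by norm_num) (by norm_num) hx 28).trans ?_
    simp only [fc_top_seven]
    norm_num [Finset.sum_range_succ]
  · norm_num [Finset.sum_range_succ]

/-- The zero is bounded by `1 - κ ^ 3` and `F` by a partial sum there. -/
lemma good_top_of_cube (hN : 7 / 2 ≤ N) {κ : ℝ} (hκ : 0 < κ)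
    (h1 : 3 * (2 * N - 1) * κ ≤ 2 * N + 1) (h2 : 27 * (2 * N - 1) ^ 3 * κ ^ 3 ≤ (6 * N - 1) ^ 2)
    (hκ2 : κ ≤ 1 / 2) (M : ℕ)
    (h : (1 - κ ^ 3 - 1 / 2) * (∑ m ∈ Finset.range M, 1 / (N - 2 + m) * (1 - κ ^ 3) ^ m
      + 1 / (N - 2 + M) * (1 - κ ^ 3) ^ M / (1 - (1 - κ ^ 3))) < 1)
    {s : ℝ} (hs : s ∈ Ico (0 : ℝ) 1) (hf : fh N (N - 1) s = 0) : Good N (N - 1) s := by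
  have h3 : κ ^ 3 ≤ (1 / 2) ^ 3 := by gcongr
  have h4 : 0 < κ ^ 3 := by positivity
  exact good_top_of_sum (by linarith) hs ⟨by linarith, by linarith⟩
    (cube_test hN hκ h1 h2 hs hf) (by linarith) M h

lemma good_top_small {n : ℕ} (h8 : 8 ≤ n) (h15 : n ≤ 15) {s : ℝ} (hs : s ∈ Ico (0 : ℝ) 1)
    (hf : fh (n / 2) (n / 2 - 1) s = 0) : Good (n / 2) (n / 2 - 1) s := by
  interval_cases n <;> push_cast at hf ⊢
  · exact good_top_of_cube (κ := 0.385) (by norm_num) (by norm_num) (by norm_num) (by norm_num)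
      (by norm_num) 22 (by norm_num [Finset.sum_range_succ]) hs hf
  · exact good_top_of_cube (κ := 0.365) (by norm_num) (by norm_num) (by norm_num) (by norm_num)
      (by norm_num) 21 (by norm_num [Finset.sum_range_succ]) hs hf
  · exact good_top_of_cube (κ := 0.349) (by norm_num) (by norm_num) (by norm_num) (by norm_num)
      (by norm_num) 20 (by norm_num [Finset.sum_range_succ]) hs hf
  · exact good_top_of_cube (κ := 0.335) (by norm_num) (by norm_num) (by norm_num) (by norm_num)
      (by norm_num) 21 (by norm_num [Finset.sum_range_succ]) hs hf
  · exact good_top_of_cube (κ := 0.324) (by norm_num) (by norm_num) (by norm_num) (by norm_num)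
      (by norm_num) 22 (by norm_num [Finset.sum_range_succ]) hs hf
  · exact good_top_of_cube (κ := 0.313) (by norm_num) (by norm_num) (by norm_num) (by norm_num)
      (by norm_num) 24 (by norm_num [Finset.sum_range_succ]) hs hf
  · exact good_top_of_cube (κ := 0.304) (by norm_num) (by norm_num) (by norm_num) (by norm_num)
      (by norm_num) 25 (by norm_num [Finset.sum_range_succ]) hs hf
  · exact good_top_of_cube (κ := 0.296) (by norm_num) (by norm_num) (by norm_num) (by norm_num)
      (by norm_num) 28 (by norm_num [Finset.sum_range_succ]) hs hf

/-- The supersolution `b (log (1 + 1 / (b y)) + y / b ^ 2)`, `b = N - 2`, `y = 1 - s`, bounds `F`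
from above for `k = n - 2`. -/
lemma Fh_le_log (hN : 8 ≤ N) {x : ℝ} (hx : x ∈ Ico (0 : ℝ) 1) :
    Fh N (N - 1) x ≤ (N - 2) * (Real.log (1 + 1 / ((N - 2) * (1 - x)))
      + (1 - x) / (N - 2) ^ 2) := by
  have hN2 : 2 < N := by linarith
  have hc0 : 0 < N - 1 := by linarith
  obtain ⟨b, hb, rfl⟩ : ∃ b, 6 ≤ b ∧ N = b + 2 := ⟨N - 2, by linarith, by ring⟩
  simp only [add_sub_cancel_right]
  have hb0 : 0 < b := by linarith
  have hlog : ∀ y, 0 < y → 2 / (2 * (b * y) + 1) ≤ Real.log (1 + 1 / (b * y)) := by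
    intro y hy
    have := Real.le_log_one_add_of_nonneg (x := 1 / (b * y)) (by positivity)
    refine le_trans (le_of_eq ?_) this
    field_simp
    ring
  have hmem : ∀ s ∈ Icc 0 x, s ∈ Ico (0 : ℝ) 1 := fun s hs => ⟨hs.1, hs.2.trans_lt hx.2⟩
  have hder : ∀ s ∈ Icc 0 x, HasDerivAt
      (fun s => b * (Real.log (1 + 1 / (b * (1 - s))) + (1 - s) / b ^ 2))
      (b * (1 / ((1 - s) * (b * (1 - s) + 1)) - 1 / b ^ 2)) s := by
    intro s hs
    have hy : 0 < 1 - s := by linarith [(hmem s hs).2]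
    have d1 : HasDerivAt (fun s : ℝ => 1 - s) (-1) s := by
      simpa using (hasDerivAt_id s).const_sub 1
    have d2 := ((d1.const_mul b).inv (by positivity)).const_add 1
    have d3 := d2.log (add_pos one_pos (inv_pos.2 (mul_pos hb0 hy))).ne'
    simp only [one_div]
    refine ((d3.add (d1.div_const (b ^ 2))).const_mul b).congr_deriv ?_
    simp only [Pi.inv_apply]
    field_simp
    ring
  refine image_le_of_deriv_right_lt_deriv_boundary'
    (f := Fh (b + 2) (b + 2 - 1)) (f' := Gh (b + 2) (b + 2 - 1))
    (B := fun s => b * (Real.log (1 + 1 / (b * (1 - s))) + (1 - s) / b ^ 2))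
    (B' := fun s => b * (1 / ((1 - s) * (b * (1 - s) + 1)) - 1 / b ^ 2)) (a := 0) (b := x)
    (fun s hs => (Fh_deriv hN2 hc0 (hmem s hs)).continuousAt.continuousWithinAt)
    (fun s hs => (Fh_deriv hN2 hc0 (hmem s ⟨hs.1, hs.2.le⟩)).hasDerivWithinAt) ?_
    (fun s hs => (hder s hs).continuousAt.continuousWithinAt)
    (fun s hs => (hder s ⟨hs.1, hs.2.le⟩).hasDerivWithinAt) ?_ ⟨hx.1, le_rfl⟩
  all_goals
    have h0 : 1 < b * (Real.log (1 + 1 / (b * (1 - 0))) + (1 - 0) / b ^ 2) := by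
      have h1 := mul_le_mul_of_nonneg_left (hlog (1 - 0) (by norm_num)) hb0.le
      have h2 : 1 < b * (2 / (2 * (b * (1 - 0)) + 1)) + b * ((1 - 0) / b ^ 2) := by
        rw [← sub_pos]
        have : b * (2 / (2 * (b * (1 - 0)) + 1)) + b * ((1 - 0) / b ^ 2) - 1 =
            (b + 1) / ((2 * b + 1) * b) := by
          field_simp
          ring
        rw [this]
        positivity
      linarith
  · rw [Fh_zero]
    exact h0.le
  · intro s hs he
    rcases hs.1.eq_or_lt with rfl | hs0
    · rw [Fh_zero] at he
      linarith
    have hsm := hmem s ⟨hs.1, hs.2.le⟩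
    have hode := F_ode hN2 hc0 hsm
    rw [he] at hode
    have hy : 0 < 1 - s := by linarith [hsm.2]
    refine lt_of_mul_lt_mul_left (a := s * (1 - s)) ?_ (mul_pos hs0 hy).le
    rw [hode]
    obtain ⟨y, rfl⟩ : ∃ y, s = 1 - y := ⟨1 - s, by ring⟩
    simp only [sub_sub_cancel] at hy ⊢
    have hl := hlog y hy
    have hz : 0 < b * y := by positivity
    have hQ : 0 < (b - 1 - 2 * (b * y)) + 1 / b ^ 2 * (((b + 1) * y - 1) *
        ((2 * (b * y) + 1) * (b * y + 1))) := by
      have e : (b - 1 - 2 * (b * y)) + 1 / b ^ 2 * (((b + 1) * y - 1) *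
        ((2 * (b * y) + 1) * (b * y + 1))) = (b ^ 2 * (b - 1 - 2 * (b * y)) +
          (b * y - 1) * ((2 * (b * y) + 1) * (b * y + 1)) +
          y * ((2 * (b * y) + 1) * (b * y + 1))) / b ^ 2 := by
        field_simp
        ring
      rw [e]
      refine div_pos (add_pos_of_pos_of_nonneg ?_ (by positivity)) (by positivity)
      set z := b * y
      -- The tangent line to `2 z ^ 3` at `z = 0.58 b`.
      have h1 : 0 ≤ 2 * ((z - 0.58 * b) ^ 2 * (z + 1.16 * b)) := by positivity
      have h2 : 0 ≤ b ^ 2 * (b - 6) := mul_nonneg (sq_nonneg b) (by linarith)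
      nlinarith [sq_nonneg (z - 1), mul_nonneg (sq_nonneg b) hz.le]
    have e2 : (b * (1 / (y * (b * y + 1)) - 1 / b ^ 2)) * ((1 - y) * y) -
        ((b + 2 - 1 - 1) + ((b + 2 - 2) * (1 - y) - (b + 2 - 1) + 1) *
          (b * (2 / (2 * (b * y) + 1) + y / b ^ 2))) =
        b * y * (((b - 1 - 2 * (b * y)) + 1 / b ^ 2 * (((b + 1) * y - 1) *
        ((2 * (b * y) + 1) * (b * y + 1)))) / ((b * y + 1) * (2 * (b * y) + 1))) := by
      field_simp
      ring
    have h3 : 0 < b * y * (((b - 1 - 2 * (b * y)) + 1 / b ^ 2 * (((b + 1) * y - 1) *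
        ((2 * (b * y) + 1) * (b * y + 1)))) / ((b * y + 1) * (2 * (b * y) + 1))) := by
      positivity
    have h4 := mul_le_mul_of_nonneg_left hl (mul_nonneg (mul_nonneg hb0.le hb0.le) hy.le)
    rw [← e2] at h3
    linarith

/-- For `n ≥ 16` the point `y = (6 N + 7) / (36 N ^ 2)` satisfies the condition of `cube_test`, and
there the bound of `Fh_le_log` is at most `b (2 + 4 y + 8 y ^ 2)`, which is below `b / (1 / 2 - y)`. -/
lemma good_top_large (hN : 8 ≤ N) {s : ℝ} (hs : s ∈ Ico (0 : ℝ) 1) (hf : fh N (N - 1) s = 0) :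
    Good N (N - 1) s := by
  obtain ⟨j, hj, rfl⟩ : ∃ j, 0 ≤ j ∧ N = j + 8 := ⟨N - 8, by linarith, by ring⟩
  set y := (6 * (j + 8) + 7) / (36 * (j + 8) ^ 2) with hy
  have hy0 : 0 < y := by positivity
  have hy27 : y ≤ 1 / 27 := by
    rw [hy, div_le_div_iff₀ (by positivity) (by norm_num)]
    nlinarith
  have hκ3 : (y ^ (1 / 3 : ℝ)) ^ 3 = y := by
    rw [← Real.rpow_natCast, ← Real.rpow_mul hy0.le]
    norm_num
  have hκ0 : 0 < y ^ (1 / 3 : ℝ) := Real.rpow_pos_of_pos hy0 _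
  have hκ : y ^ (1 / 3 : ℝ) ≤ 1 / 3 := by
    refine le_of_pow_le_pow_left₀ (n := 3) (by norm_num) (by norm_num) ?_
    rw [hκ3]
    linarith
  have hsx : s ≤ 1 - y := by
    have := cube_test (N := j + 8) (by linarith) hκ0 ?_ ?_ hs hf
    · rwa [hκ3] at this
    · nlinarith
    · rw [hκ3, hy, mul_div_assoc', div_le_iff₀ (by positivity), ← sub_nonneg]
      ring_nf
      positivity
  have hx : 1 - y ∈ Ico (0 : ℝ) 1 := ⟨by linarith, by linarith⟩
  refine good_mono (by linarith) (by linarith) hs hx hsx ?_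
  have hF := Fh_le_log (by linarith : (8 : ℝ) ≤ j + 8) hx
  have eb : j + 8 - 2 = j + 6 := by ring
  rw [sub_sub_cancel, eb] at hF
  have hlog : Real.log (1 + 1 / ((j + 6) * y)) ≤ 2 + 4 * y := by
    rw [Real.log_le_iff_le_exp (by positivity)]
    have h1 : Real.exp (2 + 4 * y) = Real.exp 1 ^ 2 * Real.exp (4 * y) := by
      rw [Real.exp_add, ← Real.exp_nat_mul]
      norm_num
    have h2 : (2.7182818283 : ℝ) ^ 2 ≤ Real.exp 1 ^ 2 := by
      have := Real.exp_one_gt_d9.le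
      gcongr
    have h3 := Real.add_one_le_exp (4 * y)
    rw [h1]
    refine le_trans ?_ (mul_le_mul (le_trans (by norm_num : (7.389 : ℝ) ≤ _) h2) h3
      (by positivity) (by positivity))
    rw [← sub_nonneg]
    have h4 : 7.389 * (4 * y + 1) - (1 + 1 / ((j + 6) * y)) =
        (29.556 * (j + 6) * y ^ 2 + 6.389 * (j + 6) * y - 1) / ((j + 6) * y) := by
      field_simp
      ring
    rw [h4]
    refine div_nonneg ?_ (by positivity)
    have h5 : 29.556 * (j + 6) * y ^ 2 + 6.389 * (j + 6) * y - 1 =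
        (29.556 * (j + 6) * (6 * (j + 8) + 7) ^ 2 + 6.389 * (j + 6) * (6 * (j + 8) + 7) *
          (36 * (j + 8) ^ 2) - (36 * (j + 8) ^ 2) ^ 2) / (36 * (j + 8) ^ 2) ^ 2 := by
      rw [hy]
      field_simp
    rw [h5]
    refine div_nonneg ?_ (by positivity)
    ring_nf
    positivity
  have hsmall : y / (j + 6) ^ 2 ≤ 8 * y ^ 2 := by
    have h6 : 1 ≤ 8 * y * (j + 6) ^ 2 := by
      rw [hy, mul_div_assoc', div_mul_eq_mul_div, le_div_iff₀ (by positivity), ← sub_nonneg]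
      ring_nf
      positivity
    rw [div_le_iff₀ (by positivity)]
    nlinarith
  have h7 : Fh (j + 8) (j + 8 - 1) (1 - y) ≤ (j + 6) * (2 + 4 * y + 8 * y ^ 2) :=
    hF.trans (mul_le_mul_of_nonneg_left (by linarith) (by linarith))
  have h8 := mul_le_mul_of_nonneg_left h7 (by linarith : 0 ≤ 1 / 2 - y)
  have h9 : 0 < (j + 6) * (8 * y ^ 3) := by positivity
  rw [Good]
  linarith

end

/-! ### Assembly -/

/-- The target inequality for all `n ≥ 7` and `1 ≤ k ≤ n - 2`. -/
lemma good_all (n k : ℕ) (hn : 7 ≤ n) (hk1 : 1 ≤ k) (hk2 : k ≤ n - 2) {s : ℝ} (hs0 : 0 < s)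
    (hs : s ∈ Ico (0 : ℝ) 1) (hf : fh (n / 2) (k / 2) s = 0) : Good (n / 2) (k / 2) s := by
  have hnR : (7 : ℝ) ≤ n := by exact_mod_cast hn
  rcases (by omega : k = 1 ∨ k = 2 ∨ k + 2 = n ∨ k + 3 = n ∨ k + 4 = n ∨ (k = 3 ∧ 8 ≤ n) ∨
    (4 ≤ k ∧ k + 5 ≤ n)) with rfl | rfl | h | h | h | ⟨rfl, h8⟩ | ⟨h4, h5⟩
  · push_cast at hf ⊢
    exact good_one (by linarith) hs0 hs hf
  · have e : ((2 : ℕ) : ℝ) / 2 = 1 := by norm_num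
    rw [e] at hf ⊢
    exact good_two (by linarith) hs hf
  · have e : (k : ℝ) / 2 = n / 2 - 1 := by
      rw [← h]
      push_cast
      ring
    rw [e] at hf ⊢
    rcases (by omega : n = 7 ∨ (8 ≤ n ∧ n ≤ 15) ∨ 16 ≤ n) with rfl | ⟨h8, h15⟩ | h16
    · push_cast at hf ⊢
      exact good_top_seven hs hf
    · exact good_top_small h8 h15 hs hf
    · have : (16 : ℝ) ≤ n := by exact_mod_cast h16
      exact good_top_large (by linarith) hs hf
  · have e : (n : ℝ) / 2 = k / 2 + 3 / 2 := by
      rw [← h]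
      push_cast
      ring
    have hk : (4 : ℝ) ≤ k := by exact_mod_cast (by omega : 4 ≤ k)
    rw [e] at hf ⊢
    exact good_sub_three (by linarith) hs hf
  · have e : (k : ℝ) / 2 = n / 2 - 2 := by
      rw [← h]
      push_cast
      ring
    rw [e] at hf ⊢
    exact good_sub_four (by linarith) hs hf
  · rcases (by omega : n = 8 ∨ n = 9 ∨ 10 ≤ n) with rfl | rfl | h
    · have e : ((8 : ℕ) : ℝ) / 2 = 4 := by norm_num
      rw [e] at hf ⊢
      push_cast at hf ⊢
      exact good_eight_three hs hf
    · push_cast at hf ⊢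
      exact good_nine_three hs hf
    · have : (10 : ℝ) ≤ n := by exact_mod_cast h
      push_cast at hf ⊢
      exact good_three (by linarith) hs hf
  · rcases (by omega : (n = 9 ∧ k = 4) ∨ 10 ≤ n) with ⟨rfl, rfl⟩ | h
    · have e : ((4 : ℕ) : ℝ) / 2 = 2 := by norm_num
      rw [e] at hf ⊢
      push_cast at hf ⊢
      exact good_nine_four hs hf
    · have h1 : (10 : ℝ) ≤ n := by exact_mod_cast h
      have h2 : (4 : ℝ) ≤ k := by exact_mod_cast h4
      have h3 : (k : ℝ) + 5 ≤ n := by exact_mod_cast h5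
      exact good_mid (by linarith) (by linarith) (by linarith) hs hf

end

/-- For every `n ≥ 7` and `1 ≤ k ≤ n-2`, the exponent `4-n` is
admissible: with `t₀` the unique zero of `f_{n,k}` in `(0,1)` and
`g̃(t) = ₂F₁(1,(n-4)/2;k/2;t²)`, one has
`g̃'(t₀)/g̃(t₀) > ((n-2)t₀ - (k-1)t₀⁻¹)/(1-t₀²)`; this is the analytic content of
the statement that `V_{n,k}` is a strict subsolution of the linearized one-phase
problem at the cone `U_{n,k}`. -/
theorem four_sub_n_admissible_all
    (n k : ℕ) (hn : 7 ≤ n) (hk1 : 1 ≤ k) (hk2 : k ≤ n - 2)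
    (t₀ : ℝ) (ht₀ : t₀ ∈ Set.Ioo (0 : ℝ) 1) (hzero : fnk n k t₀ = 0)
    (huniq : ∀ t ∈ Set.Ioo (0 : ℝ) 1, fnk n k t = 0 → t = t₀) :
    deriv (gtil n k) t₀ / gtil n k t₀
      > (((n : ℝ) - 2) * t₀ - ((k : ℝ) - 1) * t₀⁻¹) / (1 - t₀ ^ 2) := by
  have ht0 : 0 < t₀ := ht₀.1
  have hs0 : 0 < t₀ ^ 2 := by positivity
  have hs : t₀ ^ 2 ∈ Set.Ico (0 : ℝ) 1 := ⟨hs0.le, pow_lt_one₀ ht0.le ht₀.2 two_ne_zero⟩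
  have hnR : (7 : ℝ) ≤ n := by exact_mod_cast hn
  have hN2 : (2 : ℝ) < n / 2 := by linarith
  have hc0 : (0 : ℝ) < k / 2 := by
    have : (1 : ℝ) ≤ k := by exact_mod_cast hk1
    linarith
  have hg : Good (n / 2) (k / 2) (t₀ ^ 2) := by
    refine good_all n k hn hk1 hk2 hs0 hs ?_
    rw [fnk, sub_div] at hzero
    exact hzero
  have hgt : gtil n k = fun t => Fh (n / 2) (k / 2) (t ^ 2) := by
    funext t
    have e : ((n : ℝ) - 4) / 2 = n / 2 - 2 := by ring
    rw [gtil, e, Fh, hyp_eq_PS]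
  have hF := one_le_Fh hN2 hc0 hs
  have hF0 : 0 < Fh (n / 2) (k / 2) (t₀ ^ 2) := by linarith
  have hy : 0 < 1 - t₀ ^ 2 := by linarith [hs.2]
  have hd : deriv (gtil n k) t₀ = Gh (n / 2) (k / 2) (t₀ ^ 2) * (2 * t₀) := by
    rw [hgt]
    have h1 : HasDerivAt (fun t : ℝ => t ^ 2) (2 * t₀) t₀ := by
      simpa using hasDerivAt_pow 2 t₀
    exact ((Fh_deriv hN2 hc0 hs).comp_of_eq t₀ h1 rfl).deriv
  have hode := F_ode hN2 hc0 hs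
  have hval : gtil n k t₀ = Fh (n / 2) (k / 2) (t₀ ^ 2) := by rw [hgt]
  rw [hd, hval, gt_iff_lt, ← sub_pos]
  rw [Good] at hg
  -- After inserting the equation for `F'`, the difference is a positive multiple of `Good`.
  have key : Gh (n / 2) (k / 2) (t₀ ^ 2) * (2 * t₀) / Fh (n / 2) (k / 2) (t₀ ^ 2) -
      (((n : ℝ) - 2) * t₀ - ((k : ℝ) - 1) * t₀⁻¹) / (1 - t₀ ^ 2) =
      2 * (((k : ℝ) / 2 - 1) + (1 / 2 - t₀ ^ 2) * Fh (n / 2) (k / 2) (t₀ ^ 2)) /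
        (Fh (n / 2) (k / 2) (t₀ ^ 2) * (1 - t₀ ^ 2) * t₀) := by
    field_simp
    linear_combination 2 * hode
  rw [key]
  positivity
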